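/- arXiv:math/0503747 — 3 statements merged into one kernel-verified Lean document; each statement's English description precedes it below -/
import Mathlib

section
/- Let M be a von Neumann algebra and p a properly infinite projection with central support equal to 1. Then every projection q in M is a strong limit of projections equivalent to p; equivalently, the QOT-closure of {[p]} is all of P(M)/∼. -/
open ContinuousLinearMap Filter Topology

universe u

noncomputable section

variable {H : Type u} [NormedAddCommGroup H] [InnerProductSpace ℂ H] [CompleteSpace H]

/-- `p` is an (orthogonal) projection belonging to the von Neumann algebra `M`. -/
def IsProjIn (M : VonNeumannAlgebra H) (p : H →L[ℂ] H) : Prop :=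
  p ∈ M ∧ IsSelfAdjoint p ∧ p * p = p

/-- Murray–von Neumann equivalence of `p` and `q` relative to `M`:
there is a partial isometry `v ∈ M` with `v* v = p` and `v v* = q`. -/
def MvNEquiv (M : VonNeumannAlgebra H) (p q : H →L[ℂ] H) : Prop :=
  ∃ v ∈ M, adjoint v * v = p ∧ v * adjoint v = q

/-- The order on projections: `p ≤ q` iff `p q = p = q p`. -/
def ProjLE (p q : H →L[ℂ] H) : Prop := p * q = p ∧ q * p = p

/-- Murray–von Neumann subequivalence `p ≼ q`: `p` is equivalent to a subprojection of `q`. -/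
def SubEquiv (M : VonNeumannAlgebra H) (p q : H →L[ℂ] H) : Prop :=
  ∃ r, IsProjIn M r ∧ MvNEquiv M p r ∧ ProjLE r q

/-- `z` is a central projection of `M`. -/
def IsCentralProj (M : VonNeumannAlgebra H) (z : H →L[ℂ] H) : Prop :=
  IsProjIn M z ∧ ∀ x ∈ M, z * x = x * z

/-- A projection `p` is finite: `p ∼ q ≤ p` implies `q = p`. -/
def FiniteProj (M : VonNeumannAlgebra H) (p : H →L[ℂ] H) : Prop :=
  ∀ q, IsProjIn M q → ProjLE q p → MvNEquiv M p q → q = p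

/-- A projection `p` is properly infinite: it is a countably infinite sum of pairwise
orthogonal projections, each equivalent to `p`. -/
def ProperlyInfiniteProj (M : VonNeumannAlgebra H) (p : H →L[ℂ] H) : Prop :=
  p ≠ 0 ∧ ∃ e : ℕ → H →L[ℂ] H, (∀ n, IsProjIn M (e n)) ∧
    (Pairwise fun m n => e m * e n = 0) ∧ (∀ n, MvNEquiv M (e n) p) ∧
    ∀ ξ : H, HasSum (fun n => e n ξ) (p ξ)

/-- `z` is the central support of `h`: the smallest central projection with `z h = h`. -/
def IsCentralSupport (M : VonNeumannAlgebra H) (h z : H →L[ℂ] H) : Prop :=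
  IsCentralProj M z ∧ z * h = h ∧ ∀ w, IsCentralProj M w → w * h = h → z * w = z

/-- The projection `e` is σ-finite relative to `M`: every family of pairwise orthogonal
nonzero subprojections of `e` in `M` is countable. -/
def SigmaFiniteProj (M : VonNeumannAlgebra H) (e : H →L[ℂ] H) : Prop :=
  ∀ S : Set (H →L[ℂ] H), (∀ q ∈ S, IsProjIn M q ∧ q ≠ 0 ∧ ProjLE q e) →
    (S.Pairwise fun a b => a * b = 0) → S.Countable

/-- Kadison–Pedersen equivalence on the positive cone: `h ≈ k` iff there is a family
`{x_α} ⊆ M` with `h = Σ x_α* x_α` and `k = Σ x_α x_α*` (sums in the strong topology). -/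
def KPEquiv (M : VonNeumannAlgebra H) (h k : H →L[ℂ] H) : Prop :=
  ∃ (ι : Type u) (x : ι → H →L[ℂ] H), (∀ i, x i ∈ M) ∧
    (∀ ξ : H, HasSum (fun i => (adjoint (x i) * x i) ξ) (h ξ)) ∧
    (∀ ξ : H, HasSum (fun i => (x i * adjoint (x i)) ξ) (k ξ))

/-- Operator order: `a ≤ b` iff `b - a` is positive. -/
def OpLE (a b : H →L[ℂ] H) : Prop := (b - a).IsPositive

/-- `h ∈ M₊` is finite in the Kadison–Pedersen sense: `h ≈ k ≤ h` implies `k = h`. -/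
def KPFinite (M : VonNeumannAlgebra H) (h : H →L[ℂ] H) : Prop :=
  ∀ k, k ∈ M → k.IsPositive → OpLE k h → KPEquiv M h k → k = h

/-- `h ∈ M₊` is properly infinite: `z h` is finite and nonzero for no central projection `z`. -/
def KPProperlyInfinite (M : VonNeumannAlgebra H) (h : H →L[ℂ] H) : Prop :=
  h ≠ 0 ∧ ∀ z, IsCentralProj M z → KPFinite M (z * h) → z * h = 0

/-- The set of projections of `M`. -/
def ProjSet (M : VonNeumannAlgebra H) := {p : H →L[ℂ] H // IsProjIn M p}

/-- The strong operator topology on the projections of `M` (topology of pointwise convergence). -/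
instance (M : VonNeumannAlgebra H) : TopologicalSpace (ProjSet M) :=
  TopologicalSpace.induced (fun p : ProjSet M => (fun ξ => p.1 ξ : H → H)) inferInstance

/-- The quotient `P(M)/∼` of the projections of `M` by Murray–von Neumann equivalence,
carrying the quotient (strong operator) topology. -/
abbrev PQuot (M : VonNeumannAlgebra H) :=
  Quot (fun p q : ProjSet M => MvNEquiv M p.1 q.1)

/-- The quotient map `P(M) → P(M)/∼`. -/
def pquotMk (M : VonNeumannAlgebra H) : ProjSet M → PQuot M := Quot.mk _

/-- The strong operator topology on `B(H)`. -/
def SOT : TopologicalSpace (H →L[ℂ] H) :=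
  TopologicalSpace.induced (fun a : H →L[ℂ] H => (fun ξ => a ξ : H → H)) inferInstance

/-- The order induced on `P(M)/∼` by Murray–von Neumann subequivalence. -/
def QLE (M : VonNeumannAlgebra H) (a b : PQuot M) : Prop :=
  ∃ p q : ProjSet M, a = pquotMk M p ∧ b = pquotMk M q ∧ SubEquiv M p.1 q.1


/-- Inverse square root of `1 + a* a`. -/
lemma aux_invsqrt (a : H →L[ℂ] H) : ∃ S : H →L[ℂ] H, star S = S ∧
    S * (1 + star a * a) * S = 1 ∧ ∀ y, Commute (1 + star a * a) y → Commute S y := by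
  set T : H →L[ℂ] H := 1 + star a * a with hT
  have hpos : IsStrictlyPositive T :=
    IsStrictlyPositive.add_nonneg isStrictlyPositive_one (star_mul_self_nonneg a)
  refine ⟨T ^ (-(1/2) : ℝ), ?_, ?_, ?_⟩
  · exact (IsSelfAdjoint.of_nonneg CFC.rpow_nonneg).star_eq
  · have h1 : T = T ^ (1:ℝ) := (CFC.rpow_one T hpos.nonneg).symm
    have : T ^ (-(1/2) : ℝ) * T ^ (1:ℝ) * T ^ (-(1/2) : ℝ) = 1 := by
      rw [← CFC.rpow_add hpos.isUnit, ← CFC.rpow_add hpos.isUnit]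
      norm_num
      exact CFC.rpow_zero T hpos.nonneg
    rwa [← h1] at this
  · intro y hy
    exact hy.cfc_nnreal _

lemma aux_sub_zero {x : H →L[ℂ] H} (h : star x * x = 0) : x = 0 :=
  CStarRing.star_mul_self_eq_zero_iff x |>.1 h

lemma aux_pi_right {w p : H →L[ℂ] H} (hw : star w * w = p) (hp : p * p = p) (hps : star p = p) :
    w * p = w := by
  have : w - w * p = 0 := by
    apply aux_sub_zero
    have : star (w - w * p) * (w - w * p) =
      star w * w - (star w * w) * p - p * (star w * w) + p * (star w * w) * p := by
      rw [star_sub, star_mul, hps]; noncomm_ring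
    rw [this, hw, hp, hp]; simp
  exact (sub_eq_zero.1 this).symm

lemma aux_norm_star (w : H →L[ℂ] H) (ξ : H) : ‖star w ξ‖ ^ 2 = RCLike.re (inner ℂ ((w * star w) ξ) ξ) := by
  have : inner ℂ ((w * star w) ξ) ξ = inner ℂ (star w ξ) (star w ξ) := by
    rw [mul_apply_eq_comp, star_eq_adjoint, ← ContinuousLinearMap.adjoint_inner_right]
  rw [this, inner_self_eq_norm_sq]

lemma aux_norm_le {w e : H →L[ℂ] H} (hw : star w * w = e) (he : e * e = e) (hes : star e = e)
    (ξ : H) : ‖w ξ‖ = ‖e ξ‖ := by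
  have h1 := aux_norm_star (star w) ξ
  have h2 := aux_norm_star (star e) ξ
  rw [star_star] at h1 h2
  rw [hw] at h1
  rw [hes, he] at h2
  exact (sq_eq_sq₀ (norm_nonneg _) (norm_nonneg _)).1 (h1.trans h2.symm)

lemma aux_proj_norm {e : H →L[ℂ] H} (he : e * e = e) (hes : star e = e)
    (ξ : H) : ‖e ξ‖ ≤ ‖ξ‖ := by
  have h2 := aux_norm_star (star e) ξ
  rw [star_star, hes, he] at h2
  have h3 : RCLike.re (inner ℂ (e ξ) ξ) ≤ ‖e ξ‖ * ‖ξ‖ := re_inner_le_norm _ _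
  by_contra! h
  nlinarith [norm_nonneg ξ, norm_nonneg (e ξ)]

lemma aux_core (M : VonNeumannAlgebra H) {p q e w a : H →L[ℂ] H} (hp : p * p = p)
    (hps : star p = p) (hpM : p ∈ M) (he : e * e = e) (hes : star e = e) (heM : e ∈ M)
    (hqs : star q = q) (hqq : q * q = q)
    (hwM : w ∈ M) (hw : star w * w = p) (hw' : w * star w = e) (haM : a ∈ M)
    (hap : a * p = a) (hqa : q * a = a) :
    ∃ r, IsProjIn M r ∧ MvNEquiv M r p ∧ ∀ ξ ζ : H,
      ‖r ξ - q ξ‖ ≤ (‖a‖ + 1) * ‖e (ξ - q ξ)‖ + 2 * (‖q ξ - a ζ‖ + ‖e (a ζ)‖ + ‖ζ‖) := by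
  have hsw : star w * e = star w := by
    have := aux_pi_right (w := star w) (p := e) (by rwa [star_star]) he hes
    exact this
  have hwp : w * p = w := aux_pi_right hw hp hps
  have hpa : p * star a = star a := by
    have := congrArg star hap
    rwa [star_mul, hps] at this
  set a' : H →L[ℂ] H := (1 - e) * a with ha'
  have ha'M : a' ∈ M := mul_mem (sub_mem (one_mem _) heM) haM
  have ha'p : a' * p = a' := by rw [ha', mul_assoc, hap]
  have hpa' : p * star a' = star a' := by
    have := congrArg star ha'p
    rwa [star_mul, hps] at this
  have hwa : star w * a' = 0 := by
    rw [ha', ← mul_assoc, mul_sub, mul_one, hsw, sub_self, zero_mul]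
  have haw : star a' * w = 0 := by
    have := congrArg star hwa
    rwa [star_mul, star_star, star_zero] at this
  obtain ⟨S, hSs, hSTS, hScomm⟩ := aux_invsqrt a'
  set T : H →L[ℂ] H := 1 + star a' * a' with hT
  have hTM : T ∈ M := add_mem (one_mem _) (mul_mem (star_mem ha'M) ha'M)
  have hSM : S ∈ M := by
    rw [← VonNeumannAlgebra.commutant_commutant M, VonNeumannAlgebra.mem_commutant_iff]
    intro y hy
    rw [VonNeumannAlgebra.mem_commutant_iff] at hy
    exact (hScomm y (hy T hTM)).symm.eq
  have hST : S * T = T * S := (hScomm T (Commute.refl T)).eq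
  have hTp : T * p = p * T := by
    rw [hT, add_mul, mul_add, mul_assoc (star a') a', ha'p, ← mul_assoc p, hpa']; simp
  have hSp : S * p = p * S := (hScomm p hTp).eq
  have hTp1 : T * (1 - p) = 1 - p := by
    rw [hT, add_mul, mul_assoc, mul_sub, mul_sub, ha'p]; simp
  set b := a' + w with hb
  have hbM : b ∈ M := add_mem ha'M hwM
  have hbb : star b * b = T - (1 - p) := by
    rw [hb, star_add, add_mul, mul_add, mul_add, hwa, haw, hw, hT]; abel
  have hbp : b * p = b := by rw [hb, add_mul, ha'p, hwp]
  set v := b * S with hv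
  have hvM : v ∈ M := mul_mem hbM hSM
  have hvs : star v = S * star b := by rw [hv, star_mul, hSs]
  have hSS : S * S * T = 1 := by rw [mul_assoc, hST, ← mul_assoc, hSTS]
  have hvv : star v * v = p := by
    calc star v * v = S * (star b * b) * S := by rw [hvs, hv]; noncomm_ring
      _ = S * T * S - S * ((1 - p) * S) := by rw [hbb]; noncomm_ring
      _ = 1 - S * S * (T * (1 - p)) := by
        rw [hSTS, hTp1, sub_mul, mul_sub, mul_sub, ← hSp]; noncomm_ring
      _ = p := by rw [← mul_assoc, hSS]; simp
  have hvp : v * p = v := aux_pi_right hvv hp hps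
  set r := v * star v with hr
  have hrs : star r = r := by rw [hr, star_mul, star_star]
  have hrr : r * r = r := by
    calc r * r = v * (star v * v) * star v := by rw [hr]; noncomm_ring
      _ = r := by rw [hvv, hvp]
  have hrM : r ∈ M := mul_mem hvM (star_mem hvM)
  have hbv : b = v * (T * S) := by
    rw [hv, mul_assoc, ← mul_assoc S, hSTS, mul_one]
  have hrb : r * b = b := by
    have : r * v = v := by rw [hr, mul_assoc, hvv, hvp]
    rw [hbv, ← mul_assoc, this]
  refine ⟨r, ⟨hrM, hrs, hrr⟩, ⟨star v, star_mem hvM, ?_, ?_⟩, ?_⟩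
  · rw [← star_eq_adjoint, star_star]
  · rw [← star_eq_adjoint, star_star, hvv]
  intro ξ ζ
  set η := ξ - q ξ with hη
  have hqη : q η = 0 := by
    rw [hη, map_sub, ← mul_apply_eq_comp, hqq, sub_self]
  have haη : star a η = 0 := by
    have : star a * q = star a := by
      have := congrArg star hqa
      rwa [star_mul, hqs] at this
    rw [← this, mul_apply_eq_comp, hqη, map_zero]
  -- contraction property of S
  have hScontr : ∀ x, ‖S x‖ ≤ ‖x‖ := by
    intro x
    have h1 : ‖S x‖ ^ 2 + ‖a' (S x)‖ ^ 2 = ‖x‖ ^ 2 := by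
      have e1 := aux_norm_star (star S) x
      have e2 := aux_norm_star (star (a' * S)) x
      have e3 := aux_norm_star (1 : H →L[ℂ] H) x
      rw [star_star] at e1 e2
      have e4 : ‖x‖ ^ 2 = RCLike.re (inner ℂ ((1 : H →L[ℂ] H) x) x) := by simpa using e3
      rw [mul_apply_eq_comp] at e2
      rw [e1, e2, e4, ← hSTS, ← map_add, ← inner_add_left, ← add_apply]
      congr 4
      rw [hT, star_mul, hSs]; noncomm_ring
    exact le_of_sq_le_sq (by nlinarith [sq_nonneg ‖a' (S x)‖]) (norm_nonneg _)
  have hrη : ‖r η‖ ≤ (‖a‖ + 1) * ‖e η‖ := by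
    have h1 : ‖r η‖ ≤ ‖star v η‖ := by
      rw [hr, mul_apply_eq_comp, aux_norm_le hvv hp hps]
      exact aux_proj_norm hp hps _
    have h2 : ‖star v η‖ ≤ ‖star b η‖ := by
      rw [hvs]; exact hScontr _
    have h3 : star b η = - star a (e η) + star w η := by
      rw [hb, ha', star_add, star_mul, star_sub, star_one, hes]
      simp [haη]
    have h4 : ‖star w η‖ = ‖e η‖ := aux_norm_le (by rwa [star_star]) he hes η
    have h5 : ‖star a (e η)‖ ≤ ‖a‖ * ‖e η‖ := by
      have := (star a).le_opNorm (e η)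
      rwa [norm_star] at this
    have h6 := norm_add_le (- star a (e η)) (star w η)
    rw [norm_neg] at h6
    rw [h3] at h2
    linarith
  have hrκ : ‖r (q ξ) - q ξ‖ ≤ 2 * (‖q ξ - a ζ‖ + ‖e (a ζ)‖ + ‖ζ‖) := by
    have h1 : r (q ξ) - q ξ = r (q ξ - b ζ) - (q ξ - b ζ) := by
      rw [map_sub, ← mul_apply_eq_comp r b, hrb]; abel
    have h2 : q ξ - b ζ = (q ξ - a ζ) + e (a ζ) - w ζ := by
      rw [hb, ha']; simp; abel
    have h3 := aux_proj_norm hrr hrs (q ξ - b ζ)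
    have h4 := norm_sub_le (r (q ξ - b ζ)) (q ξ - b ζ)
    have h5 := norm_sub_le ((q ξ - a ζ) + e (a ζ)) (w ζ)
    have h6 := norm_add_le (q ξ - a ζ) (e (a ζ))
    have h7 : ‖w ζ‖ ≤ ‖ζ‖ := by rw [aux_norm_le hw hp hps]; exact aux_proj_norm hp hps _
    rw [← h2] at h5
    rw [h1]; linarith
  have h1 : r ξ - q ξ = r η + (r (q ξ) - q ξ) := by rw [hη, map_sub]; abel
  rw [h1]
  exact (norm_add_le _ _).trans (add_le_add hrη hrκ)

lemma aux_pair (M : VonNeumannAlgebra H) {p w₀ w₁ : H →L[ℂ] H}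
    (h0M : w₀ ∈ M) (h1M : w₁ ∈ M) (h00 : star w₀ * w₀ = p) (h11 : star w₁ * w₁ = p)
    (h01 : star w₀ * w₁ = 0) (h0p : star w₀ * p = star w₀) (h1p : star w₁ * p = star w₁)
    {a a' : H →L[ℂ] H} (haM : a ∈ M) (haM' : a' ∈ M) (ha : a * p = a) (ha' : a' * p = a') :
    ∃ c ∈ M, c * p = c ∧ c * w₀ = a ∧ c * w₁ = a' := by
  have h10 : star w₁ * w₀ = 0 := by
    have := congrArg star h01
    rwa [star_mul, star_star, star_zero] at this
  refine ⟨a * star w₀ + a' * star w₁, add_mem (mul_mem haM (star_mem h0M))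
    (mul_mem haM' (star_mem h1M)), ?_, ?_, ?_⟩
  · rw [add_mul, mul_assoc, mul_assoc, h0p, h1p]
  · rw [add_mul, mul_assoc, mul_assoc, h00, h10, ha]; simp
  · rw [add_mul, mul_assoc, mul_assoc, h11, h01, ha']; simp

lemma aux_dense (M : VonNeumannAlgebra H) {p w₀ w₁ : H →L[ℂ] H} (hpM : p ∈ M) (hpp : p * p = p)
    (hcs : IsCentralSupport M p 1)
    (h0M : w₀ ∈ M) (h1M : w₁ ∈ M) (h00 : star w₀ * w₀ = p) (h11 : star w₁ * w₁ = p)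
    (h01 : star w₀ * w₁ = 0) (h0p : star w₀ * p = star w₀) (h1p : star w₁ * p = star w₁)
    (ξ : H) {ε : ℝ} (hε : 0 < ε) : ∃ a ∈ M, a * p = a ∧ ∃ ζ, ‖ξ - a ζ‖ < ε := by
  let D : Submodule ℂ H :=
    { carrier := {y | ∃ a ∈ M, a * p = a ∧ ∃ ζ, a ζ = y}
      zero_mem' := ⟨0, zero_mem M, by simp, 0, by simp⟩
      add_mem' := by
        rintro _ _ ⟨a, haM, ha, ζ, rfl⟩ ⟨a', haM', ha', ζ', rfl⟩
        obtain ⟨c, hcM, hc, hc0, hc1⟩ := aux_pair M h0M h1M h00 h11 h01 h0p h1p haM haM' ha ha'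
        refine ⟨c, hcM, hc, w₀ ζ + w₁ ζ', ?_⟩
        rw [map_add, ← mul_apply_eq_comp, ← mul_apply_eq_comp, hc0, hc1]
      smul_mem' := by
        rintro t _ ⟨a, haM, ha, ζ, rfl⟩
        exact ⟨a, haM, ha, t • ζ, by simp⟩ }
  have hinv : ∀ y : H →L[ℂ] H, (∀ x ∈ D, y x ∈ D) →
      D.topologicalClosure ∈ Module.End.invtSubmodule (y : H →ₗ[ℂ] H) := by
    intro y hy x hx
    exact map_mem_closure y.continuous hx hy
  set K := D.topologicalClosure with hK
  haveI : CompleteSpace K := D.isClosed_topologicalClosure.completeSpace_coe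
  have hz : IsStarProjection K.starProjection := isStarProjection_starProjection
  have hzM : K.starProjection ∈ M := by
    rw [VonNeumannAlgebra.IsStarProjection.mem_iff hz]
    intro y hy
    rw [Submodule.range_starProjection]
    apply hinv
    rintro _ ⟨a, haM, ha, ζ, rfl⟩
    refine ⟨a, haM, ha, y ζ, ?_⟩
    rw [VonNeumannAlgebra.mem_commutant_iff] at hy
    rw [← mul_apply_eq_comp, hy a haM, mul_apply_eq_comp]
  have hzM' : K.starProjection ∈ M.commutant := by
    rw [VonNeumannAlgebra.IsStarProjection.mem_iff hz]
    intro y hy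
    rw [VonNeumannAlgebra.commutant_commutant] at hy
    rw [Submodule.range_starProjection]
    apply hinv
    rintro _ ⟨a, haM, ha, ζ, rfl⟩
    exact ⟨y * a, mul_mem hy haM, by rw [mul_assoc, ha], ζ, by rw [mul_apply_eq_comp]⟩
  have hzp : K.starProjection * p = p := by
    ext x
    rw [mul_apply_eq_comp]
    apply Submodule.starProjection_eq_self_iff.2
    exact D.le_topologicalClosure ⟨p, hpM, hpp, x, rfl⟩
  have h1 := hcs.2.2 K.starProjection
    ⟨⟨hzM, hz.isSelfAdjoint, hz.isIdempotentElem⟩, fun x hx =>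
      ((VonNeumannAlgebra.mem_commutant_iff.1 hzM') x hx).symm⟩ hzp
  rw [one_mul] at h1
  have hξ : ξ ∈ K := by
    apply Submodule.starProjection_eq_self_iff.1
    rw [h1]; rfl
  have hξ' : ξ ∈ closure (D : Set H) := hξ
  obtain ⟨_, ⟨a, haM, ha, ζ, rfl⟩, hb⟩ := Metric.mem_closure_iff.1 hξ' ε hε
  exact ⟨a, haM, ha, ζ, by rwa [← dist_eq_norm]⟩

lemma aux_dense_fin (M : VonNeumannAlgebra H) {p w₀ w₁ : H →L[ℂ] H} (hpM : p ∈ M) (hpp : p * p = p)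
    (hcs : IsCentralSupport M p 1)
    (h0M : w₀ ∈ M) (h1M : w₁ ∈ M) (h00 : star w₀ * w₀ = p) (h11 : star w₁ * w₁ = p)
    (h01 : star w₀ * w₁ = 0) (h0p : star w₀ * p = star w₀) (h1p : star w₁ * p = star w₁)
    (F : Finset H) {ε : ℝ} (hε : 0 < ε) :
    ∃ a ∈ M, a * p = a ∧ ∃ ζ : H → H, ∀ ξ ∈ F, ‖ξ - a (ζ ξ)‖ < ε := by
  classical
  induction F using Finset.induction_on with
  | empty => exact ⟨0, zero_mem M, by simp, 0, by simp⟩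
  | insert ξ F hξ ih =>
    obtain ⟨a, haM, ha, ζ, hζ⟩ := ih
    obtain ⟨a', haM', ha', ζ', hζ'⟩ :=
      aux_dense M hpM hpp hcs h0M h1M h00 h11 h01 h0p h1p ξ hε
    obtain ⟨c, hcM, hc, hc0, hc1⟩ := aux_pair M h0M h1M h00 h11 h01 h0p h1p haM haM' ha ha'
    refine ⟨c, hcM, hc, fun x => if x = ξ then w₁ ζ' else w₀ (ζ x), ?_⟩
    intro x hx
    by_cases hxξ : x = ξ
    · subst hxξ
      simp only [if_true]
      rwa [← mul_apply_eq_comp, hc1]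
    · simp only [hxξ, if_false]
      rw [← mul_apply_eq_comp, hc0]
      exact hζ x ((Finset.mem_insert.1 hx).resolve_left hxξ)

lemma aux_approx (M : VonNeumannAlgebra H)
    (p : H →L[ℂ] H) (hp : IsProjIn M p)
    (hpi : ProperlyInfiniteProj M p) (hcs : IsCentralSupport M p 1)
    (q : H →L[ℂ] H) (hq : IsProjIn M q) (F : Finset H) {ε : ℝ} (hε : 0 < ε) :
    ∃ r, IsProjIn M r ∧ MvNEquiv M r p ∧ ∀ ξ ∈ F, ‖r ξ - q ξ‖ < ε := by
  classical
  obtain ⟨-, e, he, horth, heq, hsum⟩ := hpi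
  choose u huM hu hu' using heq
  have hpp := hp.2.2
  have hps : star p = p := hp.2.1.star_eq
  have hqs : star q = q := hq.2.1.star_eq
  have hes : ∀ n, star (e n) = e n := fun n => (he n).2.1.star_eq
  have hee : ∀ n, e n * e n = e n := fun n => (he n).2.2
  have hue : ∀ n, u n * e n = u n := fun n => aux_pi_right (hu n) (hee n) (hes n)
  have hep : ∀ n, p * e n = e n := by
    intro n
    ext x
    have h1 := hsum (e n x)
    have h2 : HasSum (fun m => e m (e n x)) (e n (e n x)) := by
      apply hasSum_single n
      intro m hm
      rw [← mul_apply_eq_comp, horth hm]; rfl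
    have := h1.unique h2
    rw [mul_apply_eq_comp, this, ← mul_apply_eq_comp, hee]
  have hep' : ∀ n, e n * p = e n := by
    intro n
    have := congrArg star (hep n)
    rwa [star_mul, hps, hes] at this
  have hup : ∀ n, u n * p = u n := by
    intro n
    rw [← hue n, mul_assoc, hep']
  have huu : ∀ m n, m ≠ n → u m * star (u n) = 0 := by
    intro m n hmn
    have h1 : star (u n) = e n * star (u n) := by
      have := congrArg star (hue n)
      rw [star_mul, hes] at this
      exact this.symm
    rw [h1, ← hue m, mul_assoc, ← mul_assoc (e m), horth hmn]; simp
  have hnull : ∀ x : H, Tendsto (fun n => ‖e n x‖) atTop (𝓝 0) := by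
    intro x
    have := (hsum x).summable.tendsto_atTop_zero
    simpa using this.norm
  obtain ⟨a₀, ha₀M, ha₀p, ζ₀, hζ₀⟩ := aux_dense_fin M (w₀ := star (u 0)) (w₁ := star (u 1))
    hp.1 hpp hcs (star_mem (huM 0)) (star_mem (huM 1)) (by rw [star_star]; exact hu' 0)
    (by rw [star_star]; exact hu' 1) (by rw [star_star]; exact huu 0 1 (by norm_num))
    (by rw [star_star]; exact hup 0) (by rw [star_star]; exact hup 1) (F.image q)
    (ε := ε / 16) (by positivity)
  -- rescale so that the vectors are small
  obtain ⟨t, ht, htF⟩ : ∃ t : ℝ, 0 < t ∧ ∀ ξ ∈ F, t * ‖ζ₀ (q ξ)‖ < ε / 16 := by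
    have hB : 0 < ∑ ξ ∈ F, ‖ζ₀ (q ξ)‖ + 1 := by positivity
    refine ⟨ε / 16 / (∑ ξ ∈ F, ‖ζ₀ (q ξ)‖ + 1), by positivity, ?_⟩
    intro ξ hξ
    have h1 : ‖ζ₀ (q ξ)‖ ≤ ∑ ξ ∈ F, ‖ζ₀ (q ξ)‖ :=
      Finset.single_le_sum (f := fun ξ => ‖ζ₀ (q ξ)‖) (fun _ _ => norm_nonneg _) hξ
    rw [div_mul_eq_mul_div, div_lt_iff₀ hB]
    apply mul_lt_mul_of_pos_left _ (by positivity)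
    linarith
  set a : H →L[ℂ] H := ((t⁻¹ : ℝ) : ℂ) • (q * a₀) with ha
  set ζ : H → H := fun ξ => ((t : ℝ) : ℂ) • ζ₀ (q ξ) with hζ
  have haM : a ∈ M := M.toStarSubalgebra.smul_mem (mul_mem hq.1 ha₀M) _
  have hap : a * p = a := by rw [ha, smul_mul_assoc, mul_assoc, ha₀p]
  have hqa : q * a = a := by rw [ha, mul_smul_comm, ← mul_assoc, hq.2.2]
  have haζ : ∀ ξ, a (ζ ξ) = q (a₀ (ζ₀ (q ξ))) := by
    intro ξ
    have : ((t⁻¹ : ℝ) : ℂ) * ((t : ℝ) : ℂ) = 1 := by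
      rw [← Complex.ofReal_mul, inv_mul_cancel₀ ht.ne']; simp
    rw [ha, hζ]
    simp only [map_smul, smul_apply, mul_apply_eq_comp]
    rw [smul_smul, mul_comm, this, one_smul]
  have hA : ∀ ξ ∈ F, ‖q ξ - a (ζ ξ)‖ < ε / 16 := by
    intro ξ hξ
    have h1 : q ξ - a (ζ ξ) = q (q ξ - a₀ (ζ₀ (q ξ))) := by
      rw [haζ, map_sub, ← mul_apply_eq_comp q q, hq.2.2]
    rw [h1]
    exact (aux_proj_norm hq.2.2 hqs _).trans_lt (hζ₀ _ (Finset.mem_image_of_mem _ hξ))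
  have hZ : ∀ ξ ∈ F, ‖ζ ξ‖ < ε / 16 := by
    intro ξ hξ
    have := htF ξ hξ
    simp only [hζ]
    rw [norm_smul, Complex.norm_real, Real.norm_of_nonneg ht.le]
    exact this
  have hev : ∀ᶠ n in atTop, ∀ ξ ∈ F, (‖a‖ + 1) * ‖e n (ξ - q ξ)‖ < ε / 16 ∧
      ‖e n (a (ζ ξ))‖ < ε / 16 := by
    rw [Filter.eventually_all_finset]
    intro ξ _
    have h1 := (hnull (ξ - q ξ)).const_mul (‖a‖ + 1)
    rw [mul_zero] at h1
    exact (h1.eventually_lt_const (by positivity)).and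
      ((hnull (a (ζ ξ))).eventually_lt_const (by positivity))
  obtain ⟨n, hn⟩ := hev.exists
  obtain ⟨r, hr, hrp, hrest⟩ := aux_core M (p := p) (q := q) (e := e n) (w := star (u n)) (a := a)
    hpp hps hp.1 (hee n) (hes n) (he n).1 hqs hq.2.2 (star_mem (huM n))
    (by rw [star_star]; exact hu' n) (by rw [star_star]; exact hu n) haM hap hqa
  refine ⟨r, hr, hrp, fun ξ hξ => ?_⟩
  have h1 := hrest ξ (ζ ξ)
  have h2 := hn ξ hξ
  have h3 := hA ξ hξ
  have h4 := hZ ξ hξ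
  linarith [h2.1, h2.2]

/-- Let `p` be a properly infinite projection with central support `1`.
Then every projection of `M` is a strong limit of projections equivalent to `p`;
equivalently, the closure of `{[p]}` in the quotient operator topology is all of `P(M)/∼`. -/
theorem closure_singleton_univ (M : VonNeumannAlgebra H)
    (p : H →L[ℂ] H) (hp : IsProjIn M p)
    (hpi : ProperlyInfiniteProj M p) (hcs : IsCentralSupport M p 1) :
    closure {r : ProjSet M | MvNEquiv M r.1 p} = Set.univ ∧
    closure {x : PQuot M | x = pquotMk M ⟨p, hp⟩} = Set.univ := by
  have key : closure {r : ProjSet M | MvNEquiv M r.1 p} = Set.univ := by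
    apply Set.eq_univ_of_forall
    intro q
    rw [closure_induced, mem_closure_iff_nhds]
    intro U hU
    rw [nhds_pi, Filter.mem_pi] at hU
    obtain ⟨I, hI, V, hV, hVU⟩ := hU
    have : ∀ ξ : H, ∃ ε > 0, Metric.ball (q.1 ξ) ε ⊆ V ξ := fun ξ => Metric.mem_nhds_iff.1 (hV ξ)
    choose ε hε hεV using this
    obtain ⟨δ, hδ, hδI⟩ : ∃ δ : ℝ, 0 < δ ∧ ∀ ξ ∈ I, δ ≤ ε ξ := by
      rcases I.eq_empty_or_nonempty with rfl | hne
      · exact ⟨1, one_pos, by simp⟩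
      · obtain ⟨x, hx, hmin⟩ := hI.exists_minimalFor ε I hne
        refine ⟨ε x, hε x, fun ξ hξ => ?_⟩
        rcases le_total (ε x) (ε ξ) with h | h
        · exact h
        · exact hmin hξ h
    obtain ⟨r, hr, hrp, hrF⟩ := aux_approx M p hp hpi hcs q.1 q.2 hI.toFinset hδ
    refine ⟨_, hVU ?_, ⟨⟨r, hr⟩, hrp, rfl⟩⟩
    intro ξ hξ
    apply hεV
    rw [Metric.mem_ball, dist_eq_norm]
    exact (hrF ξ (hI.mem_toFinset.2 hξ)).trans_le (hδI ξ hξ)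
  refine ⟨key, ?_⟩
  apply Set.eq_univ_of_forall
  intro x
  obtain ⟨q, rfl⟩ := Quot.exists_rep x
  have hc : Continuous (pquotMk M) := continuous_quot_mk
  have hq : q ∈ closure {r : ProjSet M | MvNEquiv M r.1 p} := by rw [key]; trivial
  refine map_mem_closure hc hq ?_
  intro r hr
  exact Quot.sound hr
end
end

section
/- The quotient operator topology on P(M)/∼ is T₀ if and only if M contains no κ-homogeneous projection for any uncountable cardinal κ, equivalently if and only if M is a (possibly uncountable) direct sum of σ-finite von Neumann algebras. -/
open ContinuousLinearMap Filter Topology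

universe u

noncomputable section

variable {H : Type u} [NormedAddCommGroup H] [InnerProductSpace ℂ H] [CompleteSpace H]

/-- `p` is a homogeneous projection of size `ι`: `p` is the sum of `ι`-many mutually
equivalent orthogonal projections, each of which is a sum of centrally orthogonal
σ-finite projections. -/
def IsHomogeneousProj (M : VonNeumannAlgebra H) (ι : Type*) (p : H →L[ℂ] H) : Prop :=
  IsProjIn M p ∧ p ≠ 0 ∧ ∃ e : ι → H →L[ℂ] H,
    (∀ i, IsProjIn M (e i)) ∧ (Pairwise fun i j => e i * e j = 0) ∧
    (∀ i j, MvNEquiv M (e i) (e j)) ∧ (∀ ξ : H, HasSum (fun i => e i ξ) (p ξ)) ∧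
    ∀ i, ∃ (J : Type u) (f c : J → H →L[ℂ] H),
      (∀ j, IsProjIn M (f j) ∧ SigmaFiniteProj M (f j)) ∧
      (∀ j, IsCentralSupport M (f j) (c j)) ∧
      (Pairwise fun j j' => c j * c j' = 0) ∧
      ∀ ξ : H, HasSum (fun j => f j ξ) (e i ξ)

set_option linter.unusedSectionVars false

namespace PQ

theorem mvn_iff {M : VonNeumannAlgebra H} {p q : H →L[ℂ] H} :
    MvNEquiv M p q ↔ ∃ v ∈ M, star v * v = p ∧ v * star v = q := Iff.rfl

theorem mem_of_comm {M : VonNeumannAlgebra H} {x : H →L[ℂ] H}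
    (h : ∀ u ∈ M.commutant, u * x = x * u) : x ∈ M := by
  rw [← M.commutant_commutant]
  exact VonNeumannAlgebra.mem_commutant_iff.2 h

theorem comm_of_mem {M : VonNeumannAlgebra H} {x u : H →L[ℂ] H} (hx : x ∈ M)
    (hu : u ∈ M.commutant) : u * x = x * u :=
  (VonNeumannAlgebra.mem_commutant_iff.1 hu x hx).symm

theorem proj_of_sub (M : VonNeumannAlgebra H) (K : Submodule ℂ H) [K.HasOrthogonalProjection]
    (hK : ∀ u ∈ M.commutant, ∀ ξ ∈ K, u ξ ∈ K) : IsProjIn M K.starProjection := by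
  have h := isStarProjection_starProjection (U := K)
  refine ⟨(VonNeumannAlgebra.IsStarProjection.mem_iff h M).2 ?_, h.isSelfAdjoint, h.isIdempotentElem⟩
  intro y hy
  rw [Submodule.range_starProjection]
  exact fun ξ hξ => hK y hy ξ hξ

theorem _root_.IsProjIn.mem' {M : VonNeumannAlgebra H} {p : H →L[ℂ] H} (h : IsProjIn M p) : p ∈ M := h.1
theorem _root_.IsProjIn.sa {M : VonNeumannAlgebra H} {p : H →L[ℂ] H} (h : IsProjIn M p) : star p = p := h.2.1
theorem _root_.IsProjIn.idem {M : VonNeumannAlgebra H} {p : H →L[ℂ] H} (h : IsProjIn M p) : p * p = p := h.2.2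

/-- left support -/
theorem left_supp {M : VonNeumannAlgebra H} {a : H →L[ℂ] H} (ha : a ∈ M) :
    IsProjIn M ((LinearMap.range (a : H →ₗ[ℂ] H)).topologicalClosure.starProjection) ∧
    (LinearMap.range (a : H →ₗ[ℂ] H)).topologicalClosure.starProjection * a = a ∧
    ∀ y : H →L[ℂ] H, y * a = 0 →
      y * (LinearMap.range (a : H →ₗ[ℂ] H)).topologicalClosure.starProjection = 0 := by
  set K := (LinearMap.range (a : H →ₗ[ℂ] H)).topologicalClosure with hK
  have haK : ∀ ξ, a ξ ∈ K := fun ξ => Submodule.le_topologicalClosure _ ⟨ξ, rfl⟩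
  have hker : ∀ y : H →L[ℂ] H, ∀ L : Submodule ℂ H, IsClosed (L : Set H) → (∀ ξ, y (a ξ) ∈ L) →
      ∀ ξ ∈ K, y ξ ∈ L := by
    intro y L hL h
    have : K ≤ L.comap (y : H →ₗ[ℂ] H) := by
      apply Submodule.topologicalClosure_minimal
      · rintro _ ⟨ξ, rfl⟩
        exact h ξ
      · exact hL.preimage y.continuous
    exact this
  refine ⟨proj_of_sub M K ?_, ?_, ?_⟩
  · intro u hu
    apply hker u K (Submodule.isClosed_topologicalClosure _)
    intro ξ
    have := congrArg (fun t : H →L[ℂ] H => t ξ) (comm_of_mem ha hu)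
    simp only [mul_apply_eq_comp] at this
    rw [this]
    exact haK _
  · ext ξ
    exact Submodule.starProjection_eq_self_iff.2 (haK ξ)
  · intro y hy
    ext ξ
    have := hker y ⊥ (by simp) (fun ξ => by
      have := congrArg (fun t : H →L[ℂ] H => t ξ) hy
      simpa using this) _ (Submodule.starProjection_apply_mem K ξ)
    simpa using this

theorem ext_inner' {S T : H →L[ℂ] H} (h : ∀ ξ, inner ℂ (S ξ) ξ = inner ℂ (T ξ) ξ) : S = T := by
  have := (ext_inner_map (S : H →ₗ[ℂ] H) (T : H →ₗ[ℂ] H)).1 h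
  ext ξ
  exact congrArg (fun t : H →ₗ[ℂ] H => t ξ) this

theorem star_inner (a : H →L[ℂ] H) (ξ η : H) : inner ℂ (star a ξ) η = inner ℂ ξ (a η) :=
  ContinuousLinearMap.adjoint_inner_left a η ξ

theorem norm_abs (x : H →L[ℂ] H) (ξ : H) : ‖CFC.abs x ξ‖ = ‖x ξ‖ := by
  have h : CFC.abs x * CFC.abs x = star x * x := CFC.abs_mul_abs x
  have hs : star (CFC.abs x) = CFC.abs x := (CFC.abs_nonneg x).isSelfAdjoint.star_eq
  have e : inner ℂ (CFC.abs x ξ) (CFC.abs x ξ) = inner ℂ (x ξ) (x ξ) := by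
    have := congrArg (fun t : H →L[ℂ] H => inner ℂ (t ξ) ξ) h
    simp only [mul_apply_eq_comp] at this
    rw [star_inner] at this
    rw [← this, ← star_inner, hs]
  rw [inner_self_eq_norm_sq_to_K, inner_self_eq_norm_sq_to_K] at e
  have e' : ‖CFC.abs x ξ‖ ^ 2 = ‖x ξ‖ ^ 2 := by exact_mod_cast e
  exact (pow_left_inj₀ (norm_nonneg _) (norm_nonneg _) two_ne_zero).1 e'

/-- polar decomposition -/
theorem polar {M : VonNeumannAlgebra H} {x : H →L[ℂ] H} (hx : x ∈ M) :
    ∃ v ∈ M, IsProjIn M (star v * v) ∧ x * (star v * v) = x ∧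
      (∀ y : H →L[ℂ] H, x * y = 0 → (star v * v) * y = 0) ∧
      (v * star v) * x = x ∧ (∀ y : H →L[ℂ] H, y * x = 0 → y * (v * star v) = 0) := by
  set a := CFC.abs x with ha
  have has : star a = a := (CFC.abs_nonneg x).isSelfAdjoint.star_eq
  have haM : a ∈ M := by
    apply mem_of_comm
    intro u hu
    refine (Commute.cfcAbs_left (a := x) (b := u) (comm_of_mem hx hu).symm ?_).symm
    exact (comm_of_mem hx (star_mem hu)).symm
  obtain ⟨hs, hsa, hsy⟩ := left_supp haM
  set K := (LinearMap.range (a : H →ₗ[ℂ] H)).topologicalClosure with hK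
  set s := K.starProjection with hsdef
  have haK : ∀ ξ, a ξ ∈ K := fun ξ => Submodule.le_topologicalClosure _ ⟨ξ, rfl⟩
  let e : H →ₗ[ℂ] K := (a : H →ₗ[ℂ] H).codRestrict K haK
  have hde : DenseRange e := by
    intro ⟨k, hk⟩
    rw [closure_subtype]
    have : (Subtype.val '' Set.range e) = Set.range a := by
      rw [← Set.range_comp]; rfl
    rw [this]
    exact hk
  have hnorm : ∀ ξ, ‖(x : H →ₗ[ℂ] H) ξ‖ ≤ 1 * ‖e ξ‖ := by
    intro ξ
    rw [one_mul]
    exact (norm_abs x ξ).ge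
  let v0 : K →L[ℂ] H := (x : H →ₗ[ℂ] H).extendOfNorm e
  have hv0 : ∀ ξ, v0 (e ξ) = x ξ := LinearMap.extendOfNorm_eq hde ⟨1, hnorm⟩
  have hv0n : ∀ k : K, ‖v0 k‖ = ‖k‖ := by
    intro k
    refine hde.induction_on (p := fun k : K => ‖v0 k‖ = ‖k‖) k ?_ ?_
    · exact isClosed_eq (by fun_prop) (by fun_prop)
    · intro ξ
      rw [hv0]
      exact (norm_abs x ξ).symm
  let v : H →L[ℂ] H := v0.comp K.orthogonalProjectionOnto
  have hva : v * a = x := by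
    ext ξ
    have : K.orthogonalProjectionOnto (a ξ) = e ξ :=
      Submodule.orthogonalProjectionOnto_mem_subspace_eq_self (K := K) (e ξ)
    simp only [v, mul_apply_eq_comp, ContinuousLinearMap.comp_apply, this, hv0]
  have hvv : star v * v = s := by
    apply ext_inner'
    intro ξ
    rw [mul_apply_eq_comp, star_inner, inner_self_eq_norm_sq_to_K]
    have h1 : ‖v ξ‖ = ‖s ξ‖ := hv0n _
    have h2 : inner ℂ (s ξ) ξ = inner ℂ (s ξ) (s ξ) := by
      conv_lhs => rw [← hs.idem]
      rw [mul_apply_eq_comp]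
      nth_rewrite 1 [← hs.sa]
      rw [star_inner]
    rw [h2, inner_self_eq_norm_sq_to_K, h1]
  have hvs : v * s = v := by
    ext ξ
    have : K.orthogonalProjectionOnto (s ξ) = K.orthogonalProjectionOnto ξ :=
      Submodule.orthogonalProjectionOnto_mem_subspace_eq_self (K := K) (K.orthogonalProjectionOnto ξ)
    simp only [v, mul_apply_eq_comp, ContinuousLinearMap.comp_apply, this]
  have hvM : v ∈ M := by
    apply mem_of_comm
    intro u hu
    have h1 : (u * v - v * u) * a = 0 := by
      rw [sub_mul, mul_assoc, hva, mul_assoc, comm_of_mem haM hu, ← mul_assoc, hva,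
        comm_of_mem hx hu, sub_self]
    have h2 := hsy _ h1
    rw [sub_mul, mul_assoc, hvs, mul_assoc, comm_of_mem hs.mem' hu, ← mul_assoc, hvs] at h2
    exact sub_eq_zero.1 h2
  refine ⟨v, hvM, hvv ▸ hs, ?_, ?_, ?_, ?_⟩
  · rw [hvv]
    have : star x = a * star v := by rw [← hva, star_mul, has]
    have h3 : s * star x = star x := by rw [this, ← mul_assoc, hsa]
    have := congrArg star h3
    rwa [star_mul, star_star, hs.sa] at this
  · intro y hy
    rw [hvv]
    have h1 : a * y = 0 := by
      ext ξ
      have h2 : x (y ξ) = 0 := congrArg (fun t : H →L[ℂ] H => t ξ) hy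
      have := norm_abs x (y ξ)
      rw [h2, norm_zero, norm_eq_zero] at this
      simpa using this
    have h2 : star y * a = 0 := by
      have := congrArg star h1
      rwa [star_mul, has, star_zero] at this
    have := congrArg star (hsy _ h2)
    rwa [star_mul, star_star, hs.sa, star_zero] at this
  · rw [← hva]
    calc v * star v * (v * a) = v * (star v * v) * a := by simp only [mul_assoc]
      _ = v * a := by rw [hvv, hvs]
  · intro y hy
    have h1 : (y * v) * a = 0 := by rw [mul_assoc, hva, hy]
    have h2 := hsy _ h1
    rw [mul_assoc, hvs] at h2
    rw [← mul_assoc, h2, zero_mul]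

end PQ

namespace PQ

theorem pi_mul {v p : H →L[ℂ] H} (h : star v * v = p) (hp : p * p = p) : v * p = v := by
  have hs : star p = p := by rw [← h, star_mul, star_star]
  have : star (v * p - v) * (v * p - v) = 0 := by
    rw [star_sub, star_mul, hs]
    have : (p * star v - star v) * (v * p - v) =
        p * (star v * v) * p - p * (star v * v) - (star v * v) * p + star v * v := by noncomm_ring
    rw [this, h, hp, hp]
    simp
  exact sub_eq_zero.1 ((CStarRing.star_mul_self_eq_zero_iff _).1 this)

theorem norm_le_one {A : H →L[ℂ] H} (h : (star A * A) * (star A * A) = star A * A) : ‖A‖ ≤ 1 := by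
  have h1 : ‖star A * A‖ = ‖A‖ * ‖A‖ := CStarRing.norm_star_mul_self
  have h2 : ‖star (star A * A) * (star A * A)‖ = ‖star A * A‖ * ‖star A * A‖ :=
    CStarRing.norm_star_mul_self
  rw [star_mul, star_star, h, h1] at h2
  by_contra hc
  push Not at hc
  have : 1 < ‖A‖ * ‖A‖ := by nlinarith
  nlinarith

theorem orth_inner {a b : H →L[ℂ] H} (h : star a * b = 0) (ξ η : H) : inner ℂ (a ξ) (b η) = 0 := by
  rw [← star_star a, star_inner, ← mul_apply_eq_comp, h]
  simp

theorem proj_norm_le {M : VonNeumannAlgebra H} {p : H →L[ℂ] H} (h : IsProjIn M p) (ξ : H) :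
    ‖p ξ‖ ≤ ‖ξ‖ := by
  have : ‖p‖ ≤ 1 := norm_le_one (by rw [h.sa, h.idem, h.idem])
  calc ‖p ξ‖ ≤ ‖p‖ * ‖ξ‖ := p.le_opNorm ξ
    _ ≤ 1 * ‖ξ‖ := by gcongr
    _ = ‖ξ‖ := one_mul _

theorem half_sum {ι : Type*} (x : ι → H →L[ℂ] H)
    (hpi : ∀ i, x i * (star (x i) * x i) = x i)
    (h1 : Pairwise fun i j => star (x i) * x j = 0)
    (h2 : Pairwise fun i j => x i * star (x j) = 0) :
    ∃ X : H →L[ℂ] H, ∀ ξ, HasSum (fun i => x i ξ) (X ξ) := by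
  classical
  have hF : ∀ F : Finset ι, ‖∑ i ∈ F, x i‖ ≤ 1 := by
    intro F
    have hA : star (∑ i ∈ F, x i) * (∑ i ∈ F, x i) = ∑ i ∈ F, star (x i) * x i := by
      rw [star_sum, Finset.sum_mul_sum]
      refine Finset.sum_congr rfl fun i hi => ?_
      rw [Finset.sum_eq_single i]
      · intro j _ hj
        exact h1 hj.symm
      · intro h; exact absurd hi h
    apply norm_le_one
    rw [hA, Finset.sum_mul_sum]
    refine Finset.sum_congr rfl fun i hi => ?_
    rw [Finset.sum_eq_single i]
    · rw [mul_assoc, hpi]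
    · intro j _ hj
      rw [mul_assoc, ← mul_assoc (x i), h2 hj.symm]
      simp
    · intro h; exact absurd hi h
  have hFξ : ∀ (F : Finset ι) (ξ : H), ‖∑ i ∈ F, x i ξ‖ ≤ ‖ξ‖ := by
    intro F ξ
    have := (∑ i ∈ F, x i).le_opNorm ξ
    rw [_root_.sum_apply] at this
    calc _ ≤ _ := this
      _ ≤ 1 * ‖ξ‖ := by gcongr; exact hF F
      _ = _ := one_mul _
  have hsum : ∀ ξ, Summable fun i => x i ξ := by
    intro ξ
    have hO : OrthogonalFamily ℂ (fun i => LinearMap.range (x i : H →ₗ[ℂ] H))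
        (fun i => (LinearMap.range (x i : H →ₗ[ℂ] H)).subtypeₗᵢ) := by
      intro i j hij
      rintro ⟨_, a, rfl⟩ ⟨_, b, rfl⟩
      exact orth_inner (h1 hij) a b
    have := (hO.summable_iff_norm_sq_summable (fun i => ⟨x i ξ, ⟨ξ, rfl⟩⟩)).2 ?_
    · exact this
    · apply summable_of_sum_le (c := ‖ξ‖ ^ 2)
      · intro i; positivity
      · intro F
        have := hO.norm_sum (fun i => ⟨x i ξ, ⟨ξ, rfl⟩⟩) F
        rw [← this]
        gcongr
        exact hFξ F ξ
  let X : H →L[ℂ] H := LinearMap.mkContinuous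
    { toFun := fun ξ => ∑' i, x i ξ
      map_add' := fun ξ η => by
        simp only [map_add]
        exact (hsum ξ).tsum_add (hsum η)
      map_smul' := fun c ξ => by
        simp only [map_smul, RingHom.id_apply]
        exact ((hsum ξ).tsum_const_smul c) } 1 (by
      intro ξ
      rw [one_mul]
      refine le_of_tendsto ((hsum ξ).hasSum.norm) (Eventually.of_forall fun F => hFξ F ξ))
  exact ⟨X, fun ξ => (hsum ξ).hasSum⟩

theorem sum_mem {M : VonNeumannAlgebra H} {ι : Type*} {x : ι → H →L[ℂ] H} {X : H →L[ℂ] H}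
    (hM : ∀ i, x i ∈ M) (h : ∀ ξ, HasSum (fun i => x i ξ) (X ξ)) : X ∈ M := by
  apply mem_of_comm
  intro u hu
  ext ξ
  have h1 := (h ξ).mapL u
  have h2 := h (u ξ)
  have : ∀ i, u (x i ξ) = x i (u ξ) := fun i =>
    congrArg (fun t : H →L[ℂ] H => t ξ) (comm_of_mem (hM i) hu)
  simp only [this] at h1
  exact h1.unique h2

theorem sum_mul_left {ι : Type*} {x : ι → H →L[ℂ] H} {X : H →L[ℂ] H}
    (h : ∀ ξ, HasSum (fun i => x i ξ) (X ξ)) (y : H →L[ℂ] H) :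
    ∀ ξ, HasSum (fun i => (y * x i) ξ) ((y * X) ξ) := fun ξ => (h ξ).mapL y

theorem sum_mul_right {ι : Type*} {x : ι → H →L[ℂ] H} {X : H →L[ℂ] H}
    (h : ∀ ξ, HasSum (fun i => x i ξ) (X ξ)) (y : H →L[ℂ] H) :
    ∀ ξ, HasSum (fun i => (x i * y) ξ) ((X * y) ξ) := fun ξ => h (y ξ)

theorem sum_unique {ι : Type*} {x : ι → H →L[ℂ] H} {X Y : H →L[ℂ] H}
    (h : ∀ ξ, HasSum (fun i => x i ξ) (X ξ)) (h' : ∀ ξ, HasSum (fun i => x i ξ) (Y ξ)) : X = Y := by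
  ext ξ
  exact (h ξ).unique (h' ξ)

theorem sum_single {ι : Type*} {x : ι → H →L[ℂ] H} {X : H →L[ℂ] H}
    (h : ∀ ξ, HasSum (fun i => x i ξ) (X ξ)) (i : ι) (h0 : ∀ j ≠ i, x j = 0) : X = x i := by
  ext ξ
  refine (h ξ).unique (hasSum_single i fun j hj => by rw [h0 j hj]; rfl)

theorem sum_zero {ι : Type*} {x : ι → H →L[ℂ] H} {X : H →L[ℂ] H}
    (h : ∀ ξ, HasSum (fun i => x i ξ) (X ξ)) (h0 : ∀ j, x j = 0) : X = 0 := by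
  ext ξ
  have := h ξ
  simp only [h0] at this
  exact this.unique hasSum_zero

theorem sum_star {ι : Type*} {x : ι → H →L[ℂ] H} {X Y : H →L[ℂ] H}
    (h : ∀ ξ, HasSum (fun i => x i ξ) (X ξ)) (h' : ∀ ξ, HasSum (fun i => star (x i) ξ) (Y ξ)) :
    Y = star X := by
  ext ξ
  apply ext_inner_right ℂ
  intro η
  rw [star_inner]
  have a1 : HasSum (fun i => inner ℂ ξ (x i η)) (inner ℂ ξ (X η)) := (h η).mapL (innerSL ℂ ξ)
  have a2 : HasSum (fun i => inner ℂ η (star (x i) ξ)) (inner ℂ η (Y ξ)) := (h' ξ).mapL (innerSL ℂ η)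
  have a3 := a2.star
  simp only [← starRingEnd_apply, inner_conj_symm, star_inner] at a3
  exact a3.unique a1

/-- strong sum of a family of orthogonal partial isometries -/
theorem pi_sum {M : VonNeumannAlgebra H} {ι : Type*} (x : ι → H →L[ℂ] H) (hM : ∀ i, x i ∈ M)
    (hpi : ∀ i, x i * (star (x i) * x i) = x i)
    (h1 : Pairwise fun i j => star (x i) * x j = 0)
    (h2 : Pairwise fun i j => x i * star (x j) = 0) :
    ∃ X ∈ M, (∀ ξ, HasSum (fun i => x i ξ) (X ξ)) ∧
      (∀ ξ, HasSum (fun i => star (x i) ξ) (star X ξ)) ∧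
      (∀ ξ, HasSum (fun i => (star (x i) * x i) ξ) ((star X * X) ξ)) ∧
      (∀ ξ, HasSum (fun i => (x i * star (x i)) ξ) ((X * star X) ξ)) := by
  obtain ⟨X, hX⟩ := half_sum x hpi h1 h2
  obtain ⟨Y, hY⟩ := half_sum (fun i => star (x i)) (fun i => by
    have := congrArg star (hpi i)
    simpa only [star_mul, star_star, mul_assoc] using this)
    (fun i j hij => by simpa using h2 hij) (fun i j hij => by simpa using h1 hij)
  obtain rfl := sum_star hX hY
  refine ⟨X, sum_mem hM hX, hX, hY, ?_, ?_⟩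
  · have : ∀ i, star X * x i = star (x i) * x i := fun i =>
      sum_single (sum_mul_right hY (x i)) i fun j hj => h1 hj
    intro ξ
    have := sum_mul_left hX (star X) ξ
    simpa only [‹∀ i, star X * x i = star (x i) * x i›] using this
  · have : ∀ i, X * star (x i) = x i * star (x i) := fun i =>
      sum_single (sum_mul_right hX (star (x i))) i fun j hj => h2 hj
    intro ξ
    have := sum_mul_left hY X ξ
    simpa only [‹∀ i, X * star (x i) = x i * star (x i)›] using this

theorem sum_sa {ι : Type*} {x : ι → H →L[ℂ] H} {X : H →L[ℂ] H}
    (h : ∀ ξ, HasSum (fun i => x i ξ) (X ξ)) (hs : ∀ i, star (x i) = x i) : star X = X :=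
  (sum_star h (by simpa only [hs] using h)).symm

/-- sum of orthogonal projections -/
theorem proj_sum {M : VonNeumannAlgebra H} {ι : Type*} (p : ι → H →L[ℂ] H)
    (hp : ∀ i, IsProjIn M (p i)) (ho : Pairwise fun i j => p i * p j = 0) :
    ∃ P, IsProjIn M P ∧ (∀ ξ, HasSum (fun i => p i ξ) (P ξ)) ∧ (∀ i, P * p i = p i) ∧
      (∀ i, p i * P = p i) := by
  obtain ⟨P, hPM, hP, hP', hPP, -⟩ := pi_sum p (fun i => (hp i).1)
    (fun i => by rw [(hp i).sa, (hp i).idem, (hp i).idem])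
    (fun i j hij => by simpa only [(hp i).sa] using ho hij)
    (fun i j hij => by simpa only [(hp j).sa] using ho hij)
  have hs : star P = P := sum_sa hP fun i => (hp i).sa
  have hl : ∀ i, P * p i = p i := fun i => by
    rw [sum_single (sum_mul_right hP (p i)) i fun j hj => ho hj, (hp i).idem]
  refine ⟨P, ⟨hPM, hs, ?_⟩, hP, hl, fun i => ?_⟩
  · rw [hs] at hPP
    refine sum_unique hPP ?_
    simpa only [(hp _).sa, (hp _).idem] using hP
  · have := congrArg star (hl i)
    rwa [star_mul, hs, (hp i).sa] at this

theorem exists_maximal_family {α : Type*} (P : α → Prop) (R : α → α → Prop) (hR : ∀ a b, R a b → R b a) :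
    ∃ S : Set α, (∀ a ∈ S, P a) ∧ S.Pairwise R ∧ ∀ a, P a → (∀ b ∈ S, R b a) → a ∈ S := by
  obtain ⟨S, hS⟩ := zorn_subset {S : Set α | (∀ a ∈ S, P a) ∧ S.Pairwise R} (by
    intro c hc hchain
    refine ⟨⋃₀ c, ⟨?_, ?_⟩, fun s hs => Set.subset_sUnion_of_mem hs⟩
    · rintro a ⟨s, hs, ha⟩
      exact (hc hs).1 a ha
    · exact (Set.pairwise_sUnion hchain.directedOn).2 fun s hs => (hc hs).2)
  refine ⟨S, hS.prop.1, hS.prop.2, fun a ha hb => ?_⟩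
  have : insert a S ⊆ S := hS.le_of_ge (y := insert a S) ⟨?_, ?_⟩ (Set.subset_insert _ _)
  · exact this (Set.mem_insert _ _)
  · rintro b (rfl | hb')
    · exact ha
    · exact hS.prop.1 b hb'
  · exact hS.prop.2.insert fun b hb' _ => ⟨hR _ _ (hb b hb'), hb b hb'⟩

end PQ

namespace PQ

/-- subequivalence through an explicit partial isometry -/
def PSub (M : VonNeumannAlgebra H) (p q : H →L[ℂ] H) : Prop :=
  ∃ v ∈ M, star v * v = p ∧ q * v = v

theorem sub_proj {M : VonNeumannAlgebra H} {p q : H →L[ℂ] H} (hp : IsProjIn M p)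
    (hq : IsProjIn M q) (h : p * q = q) : IsProjIn M (p - q) := by
  have h' : q * p = q := by
    have := congrArg star h
    rwa [star_mul, hp.sa, hq.sa] at this
  refine ⟨sub_mem hp.1 hq.1, ?_, ?_⟩
  · change star (p - q) = _
    rw [star_sub, hp.sa, hq.sa]
  · rw [sub_mul, mul_sub, mul_sub, hp.idem, hq.idem, h, h']
    abel

theorem one_proj (M : VonNeumannAlgebra H) : IsProjIn M (1 : H →L[ℂ] H) :=
  ⟨one_mem M, star_one _, one_mul _⟩

theorem zero_proj (M : VonNeumannAlgebra H) : IsProjIn M (0 : H →L[ℂ] H) :=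
  ⟨zero_mem M, star_zero _, zero_mul _⟩

theorem le_symm {M : VonNeumannAlgebra H} {p q : H →L[ℂ] H} (hp : IsProjIn M p)
    (hq : IsProjIn M q) (h : p * q = q) : q * p = q := by
  have := congrArg star h
  rwa [star_mul, hp.sa, hq.sa] at this

theorem orth_symm {M : VonNeumannAlgebra H} {p q : H →L[ℂ] H} (hp : IsProjIn M p)
    (hq : IsProjIn M q) (h : p * q = 0) : q * p = 0 := by
  have := congrArg star h
  rwa [star_mul, hp.sa, hq.sa, star_zero] at this

theorem range_proj {M : VonNeumannAlgebra H} {v : H →L[ℂ] H} (hv : v ∈ M)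
    (h : (star v * v) * (star v * v) = star v * v) : IsProjIn M (v * star v) := by
  refine ⟨mul_mem hv (star_mem hv), ?_, ?_⟩
  · change star _ = _
    rw [star_mul, star_star]
  · have := pi_mul rfl h
    calc v * star v * (v * star v) = (v * (star v * v)) * star v := by simp only [mul_assoc]
      _ = _ := by rw [this]

theorem PSub.trans {M : VonNeumannAlgebra H} {p q r : H →L[ℂ] H} (h : PSub M p q) (h' : PSub M q r) :
    PSub M p r := by
  obtain ⟨v, hv, h1, h2⟩ := h
  obtain ⟨w, hw, h3, h4⟩ := h'
  refine ⟨w * v, mul_mem hw hv, ?_, by rw [← mul_assoc, h4]⟩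
  calc star (w * v) * (w * v) = star v * ((star w * w) * v) := by simp only [star_mul, mul_assoc]
    _ = p := by rw [h3, h2, h1]

theorem PSub.of_le {M : VonNeumannAlgebra H} {p q : H →L[ℂ] H} (hp : IsProjIn M p) (h : q * p = p) :
    PSub M p q := ⟨p, hp.1, by rw [hp.sa, hp.idem], h⟩

theorem PSub.of_mvn {M : VonNeumannAlgebra H} {p q : H →L[ℂ] H} (hp : IsProjIn M p)
    (h : MvNEquiv M p q) : PSub M p q := by
  obtain ⟨v, hv, h1, h2⟩ := mvn_iff.1 h
  exact ⟨v, hv, h1, by rw [← h2, mul_assoc, h1, pi_mul h1 hp.idem]⟩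

theorem mvn_symm {M : VonNeumannAlgebra H} {p q : H →L[ℂ] H} (h : MvNEquiv M p q) : MvNEquiv M q p := by
  obtain ⟨v, hv, h1, h2⟩ := mvn_iff.1 h
  exact mvn_iff.2 ⟨star v, star_mem hv, by rwa [star_star], by rwa [star_star]⟩

theorem mvn_trans {M : VonNeumannAlgebra H} {p q r : H →L[ℂ] H} (hp : IsProjIn M p) (hr : IsProjIn M r)
    (h : MvNEquiv M p q) (h' : MvNEquiv M q r) : MvNEquiv M p r := by
  obtain ⟨v, hv, h1, h2⟩ := mvn_iff.1 h
  obtain ⟨w, hw, h3, h4⟩ := mvn_iff.1 h'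
  refine mvn_iff.2 ⟨w * v, mul_mem hw hv, ?_, ?_⟩
  · calc star (w * v) * (w * v) = star v * ((star w * w) * v) := by simp only [star_mul, mul_assoc]
      _ = (star v * v) * (star v * v) := by rw [h3, ← h2]; simp only [mul_assoc]
      _ = p := by rw [h1, hp.idem]
  · calc (w * v) * star (w * v) = w * ((v * star v) * star w) := by simp only [star_mul, mul_assoc]
      _ = (w * star w) * (w * star w) := by rw [h2, ← h3]; simp only [mul_assoc]
      _ = r := by rw [h4, hr.idem]

theorem central_mul {M : VonNeumannAlgebra H} {z p : H →L[ℂ] H} (hz : IsCentralProj M z)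
    (hp : IsProjIn M p) : IsProjIn M (z * p) := by
  refine ⟨mul_mem hz.1.1 hp.1, ?_, ?_⟩
  · change star _ = _
    rw [star_mul, hz.1.sa, hp.sa, hz.2 p hp.1]
  · rw [mul_assoc, ← mul_assoc p, ← hz.2 p hp.1, mul_assoc, hp.idem, ← mul_assoc, hz.1.idem]

theorem central_one_sub {M : VonNeumannAlgebra H} {z : H →L[ℂ] H} (hz : IsCentralProj M z) :
    IsCentralProj M (1 - z) :=
  ⟨sub_proj (one_proj M) hz.1 (one_mul _), fun x hx => by rw [sub_mul, mul_sub, hz.2 x hx]; simp⟩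

theorem PSub.central {M : VonNeumannAlgebra H} {z p q : H →L[ℂ] H} (hz : IsCentralProj M z)
    (hq : IsProjIn M q)
    (h : PSub M p q) : PSub M (z * p) (z * q) := by
  obtain ⟨v, hv, h1, h2⟩ := h
  refine ⟨z * v, mul_mem hz.1.1 hv, ?_, ?_⟩
  · calc star (z * v) * (z * v) = star v * (star z * z) * v := by simp only [star_mul, mul_assoc]
      _ = star v * z * v := by rw [hz.1.sa, hz.1.idem]
      _ = z * (star v * v) := by rw [← hz.2 _ (star_mem hv), mul_assoc]
      _ = _ := by rw [h1]
  · calc z * q * (z * v) = z * (q * z) * v := by simp only [mul_assoc]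
      _ = z * z * (q * v) := by rw [← hz.2 q hq.1]; simp only [mul_assoc]
      _ = z * v := by rw [hz.1.idem, h2]

theorem mvn_central {M : VonNeumannAlgebra H} {z p q : H →L[ℂ] H} (hz : IsCentralProj M z)
    (h : MvNEquiv M p q) : MvNEquiv M (z * p) (z * q) := by
  obtain ⟨v, hv, h1, h2⟩ := mvn_iff.1 h
  refine mvn_iff.2 ⟨z * v, mul_mem hz.1.1 hv, ?_, ?_⟩
  · calc star (z * v) * (z * v) = star v * (star z * z) * v := by simp only [star_mul, mul_assoc]
      _ = star v * z * v := by rw [hz.1.sa, hz.1.idem]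
      _ = z * (star v * v) := by rw [← hz.2 _ (star_mem hv), mul_assoc]
      _ = _ := by rw [h1]
  · calc (z * v) * star (z * v) = z * ((v * star v) * z) := by rw [star_mul, hz.1.sa]; simp only [mul_assoc]
      _ = z * z * (v * star v) := by
        rw [← hz.2 _ (mul_mem hv (star_mem hv))]; simp only [mul_assoc]
      _ = _ := by rw [h2, hz.1.idem]

/-- central support -/
theorem central_supp {M : VonNeumannAlgebra H} {f : H →L[ℂ] H} (hf : IsProjIn M f) :
    ∃ c, IsCentralSupport M f c ∧ ∀ e : H →L[ℂ] H, (∀ x ∈ M, e * (x * f) = 0) → e * c = 0 := by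
  let K : Submodule ℂ H :=
    (Submodule.span ℂ {η | ∃ x ∈ M, ∃ ξ, η = x (f ξ)}).topologicalClosure
  have hmem : ∀ x ∈ M, ∀ ξ, x (f ξ) ∈ K := fun x hx ξ =>
    Submodule.le_topologicalClosure _ (Submodule.subset_span ⟨x, hx, ξ, rfl⟩)
  have hmin : ∀ (y : H →L[ℂ] H) (L : Submodule ℂ H), IsClosed (L : Set H) →
      (∀ x ∈ M, ∀ ξ, y (x (f ξ)) ∈ L) → ∀ η ∈ K, y η ∈ L := by
    intro y L hL h
    have : K ≤ L.comap (y : H →ₗ[ℂ] H) := by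
      apply Submodule.topologicalClosure_minimal
      · rw [Submodule.span_le]
        rintro _ ⟨x, hx, ξ, rfl⟩
        exact h x hx ξ
      · exact hL.preimage y.continuous
    exact this
  have hKc : IsClosed (K : Set H) := Submodule.isClosed_topologicalClosure _
  have hK1 : IsProjIn M K.starProjection := by
    apply proj_of_sub
    intro u hu
    apply hmin u K hKc
    intro x hx ξ
    have h1 := congrArg (fun t : H →L[ℂ] H => t ξ) (comm_of_mem (mul_mem hx hf.1) hu)
    simp only [mul_apply_eq_comp] at h1
    rw [h1]
    exact hmem x hx _
  have hK2 : IsProjIn M.commutant K.starProjection := by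
    apply proj_of_sub
    intro u hu
    rw [M.commutant_commutant] at hu
    apply hmin u K hKc
    intro x hx ξ
    exact hmem (u * x) (mul_mem hu hx) ξ
  have hlast : ∀ e : H →L[ℂ] H, (∀ x ∈ M, e * (x * f) = 0) → e * K.starProjection = 0 := by
    intro e he
    ext ξ
    have := hmin e ⊥ (by simp) (fun x hx ξ => by
      have := congrArg (fun t : H →L[ℂ] H => t ξ) (he x hx)
      simpa using this) _ (Submodule.starProjection_apply_mem K ξ)
    simpa using this
  refine ⟨K.starProjection, ⟨⟨hK1, fun x hx => comm_of_mem hx hK2.1⟩, ?_, ?_⟩, hlast⟩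
  · ext ξ
    exact Submodule.starProjection_eq_self_iff.2 (hmem 1 (one_mem M) ξ)
  · intro w hw hwf
    have h1 : (1 - w) * K.starProjection = 0 := by
      apply hlast
      intro x hx
      rw [sub_mul, one_mul, ← mul_assoc, hw.2 x hx, mul_assoc, hwf, sub_self]
    rw [sub_mul, one_mul, sub_eq_zero] at h1
    rw [← hw.2 _ hK1.1]
    exact h1.symm

theorem exists_pi {M : VonNeumannAlgebra H} {p q x : H →L[ℂ] H} (hp : IsProjIn M p) (hq : IsProjIn M q)
    (hx : x ∈ M) (h : q * (x * p) ≠ 0) :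
    ∃ v ∈ M, v ≠ 0 ∧ v * (star v * v) = v ∧ IsProjIn M (star v * v) ∧ v * p = v ∧ q * v = v := by
  obtain ⟨v, hv, h1, h2, h3, h4, h5⟩ := polar (mul_mem hq.1 (mul_mem hx hp.1))
  have hv3 : v * (star v * v) = v := pi_mul rfl h1.idem
  refine ⟨v, hv, ?_, hv3, h1, ?_, ?_⟩
  · rintro rfl
    apply h
    rw [← h4]
    simp
  · have := h3 (1 - p) (by rw [mul_assoc, mul_assoc, mul_sub, mul_one, hp.idem]; simp)
    rw [mul_sub, mul_one, sub_eq_zero] at this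
    rw [← hv3, mul_assoc, ← this]
  · have := h5 (1 - q) (by rw [← mul_assoc, sub_mul, one_mul, hq.idem]; simp)
    rw [sub_mul, one_mul, sub_eq_zero] at this
    calc q * v = q * (v * star v) * v := by rw [mul_assoc, mul_assoc v, hv3]
      _ = v := by rw [← this, mul_assoc, hv3]

theorem comparison {M : VonNeumannAlgebra H} {p q : H →L[ℂ] H} (hp : IsProjIn M p) (hq : IsProjIn M q) :
    ∃ z, IsCentralProj M z ∧ PSub M (z * p) (z * q) ∧ PSub M ((1 - z) * q) ((1 - z) * p) := by
  obtain ⟨S, hS1, hS2, hS3⟩ := exists_maximal_family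
    (fun v : H →L[ℂ] H => v ∈ M ∧ v ≠ 0 ∧ v * (star v * v) = v ∧ v * p = v ∧ q * v = v)
    (fun a b => star a * b = 0 ∧ a * star b = 0) (by
      rintro a b ⟨h1, h2⟩
      have h1' := congrArg star h1
      have h2' := congrArg star h2
      simp only [star_mul, star_star, star_zero] at h1' h2'
      exact ⟨h1', h2'⟩)
  have o1 : Pairwise fun i j : S => star (i : H →L[ℂ] H) * j = 0 := fun i j hij =>
    (hS2 i.2 j.2 (fun h => hij (Subtype.ext h))).1
  have o2 : Pairwise fun i j : S => (i : H →L[ℂ] H) * star (j : H →L[ℂ] H) = 0 := fun i j hij =>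
    (hS2 i.2 j.2 (fun h => hij (Subtype.ext h))).2
  obtain ⟨V, hVM, hV, hV', hVV, hVV'⟩ := pi_sum (M := M) (fun v : S => (v : H →L[ℂ] H))
    (fun i => (hS1 i i.2).1) (fun i => (hS1 i i.2).2.2.1) o1 o2
  have hVs : ∀ s : S, star V * s = star (s : H →L[ℂ] H) * s := fun i =>
    sum_single (sum_mul_right hV' (i : H →L[ℂ] H)) i fun j hj => o1 hj
  have hVs' : ∀ s : S, V * star (s : H →L[ℂ] H) = s * star (s : H →L[ℂ] H) := fun i =>
    sum_single (sum_mul_right hV (star (i : H →L[ℂ] H))) i fun j hj => o2 hj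
  have hVss : ∀ s : S, V * (star (s : H →L[ℂ] H) * s) = s := fun s => by
    rw [← mul_assoc, hVs', mul_assoc, (hS1 s s.2).2.2.1]
  have hV3 : V * (star V * V) = V := by
    refine sum_unique (sum_mul_left hVV V) ?_
    simpa only [hVss] using hV
  have hidem : (star V * V) * (star V * V) = star V * V := by rw [mul_assoc, hV3]
  have hP : IsProjIn M (star V * V) := by
    have := range_proj (v := star V) (star_mem hVM) (by
      rw [star_star]
      calc V * star V * (V * star V) = (V * (star V * V)) * star V := by simp only [mul_assoc]
        _ = _ := by rw [hV3])
    rwa [star_star] at this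
  have hQ : IsProjIn M (V * star V) := range_proj hVM hidem
  have hVp : V * p = V := by
    refine sum_unique (sum_mul_right hV p) ?_
    simpa only [(hS1 _ (Subtype.mem _)).2.2.2.1] using hV
  have hqV : q * V = V := by
    refine sum_unique (sum_mul_left hV q) ?_
    simpa only [(hS1 _ (Subtype.mem _)).2.2.2.2] using hV
  have hpV : p * star V = star V := by
    have := congrArg star hVp
    rwa [star_mul, hp.sa] at this
  have hp1 : IsProjIn M (p - star V * V) := sub_proj hp hP (by rw [← mul_assoc, hpV])
  have hq1 : IsProjIn M (q - V * star V) := sub_proj hq hQ (by rw [← mul_assoc, hqV])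
  have hzero : ∀ x ∈ M, (q - V * star V) * (x * (p - star V * V)) = 0 := by
    intro x hx
    by_contra hne
    obtain ⟨v, hv, hv0, hv3, hvp, hv1, hv2⟩ := exists_pi hp1 hq1 hx hne
    have k1 : star V * v = 0 := by
      rw [← hv2, ← mul_assoc, mul_sub, ← mul_assoc]
      have : star V * q = star V := by
        have := congrArg star hqV
        rwa [star_mul, hq.sa] at this
      have h3 : star V * V * star V = star V := by
        have := congrArg star hV3
        simpa only [star_mul, star_star, mul_assoc] using this
      rw [this, h3, sub_self, zero_mul]
    have k2 : v * star V = 0 := by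
      rw [← hv1, mul_assoc, sub_mul, hpV]
      have h3 : star V * V * star V = star V := by
        have := congrArg star hV3
        simpa only [star_mul, star_star, mul_assoc] using this
      rw [h3, sub_self, mul_zero]
    have : v ∈ S := by
      apply hS3
      · refine ⟨hv, hv0, hv3, ?_, ?_⟩
        · rw [← hv1, mul_assoc, sub_mul, hp.idem, mul_assoc, hVp]
        · rw [← hv2, ← mul_assoc, mul_sub, hq.idem, ← mul_assoc, hqV]
      · intro s hs
        have e1 : star s = star s * V * star V := by
          have := congrArg star (hVss ⟨s, hs⟩)
          simp only [star_mul, star_star] at this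
          have h4 := congrArg star (hVs ⟨s, hs⟩)
          simp only [star_mul, star_star] at h4
          rw [h4, this]
        have e2 : s = s * star V * V := by
          have h4 := congrArg star (hVs' ⟨s, hs⟩)
          simp only [star_mul, star_star] at h4
          have h5 : star s * (s * star s) = star s := by
            have := congrArg star (hS1 s hs).2.2.1
            simpa only [star_mul, star_star, mul_assoc] using this
          have h6 : s * star V * V = V * (star V * V) - (V - s) * (star V * V) := by
            rw [sub_mul]; simp only [mul_assoc]; abel
          have h7 : (V - s) * (star V * V) = V - s := by
            have a : s * (star V * V) = s := by
              rw [← mul_assoc, h4]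
              have := sum_single (sum_mul_left hV (s * star s)) ⟨s, hs⟩ (fun j hj => by
                rw [mul_assoc, o1 (i := ⟨s, hs⟩) hj.symm, mul_zero])
              rw [this]
              simp only [mul_assoc]
              exact (hS1 s hs).2.2.1
            rw [sub_mul, hV3, a]
          rw [h6, h7, hV3]; abel
        constructor
        · rw [e1, mul_assoc, k1, mul_zero]
        · have : star v = star V * 0 + star v := by simp
          have k3 : V * star v = 0 := by
            have := congrArg star k2
            rwa [star_mul, star_star, star_zero] at this
          rw [e2, mul_assoc, k3, mul_zero]
    have hk : star V * v = star v * v := hVs ⟨v, this⟩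
    rw [k1] at hk
    exact hv0 ((CStarRing.star_mul_self_eq_zero_iff _).1 hk.symm)
  obtain ⟨c, hc, hc'⟩ := central_supp hp1
  have hqc := hc' _ hzero
  have hcc := hc.1
  refine ⟨1 - c, central_one_sub hcc, ⟨(1 - c) * V, mul_mem (sub_mem (one_mem M) hcc.1.1) hVM, ?_, ?_⟩, ?_⟩
  · have hz := central_one_sub hcc
    have e1 : (1 - c) * (p - star V * V) = 0 := by rw [sub_mul, one_mul, hc.2.1, sub_self]
    rw [mul_sub, sub_eq_zero] at e1
    rw [e1]
    calc star ((1 - c) * V) * ((1 - c) * V) = star V * (star (1 - c) * (1 - c)) * V := by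
          simp only [star_mul, mul_assoc]
      _ = star V * (1 - c) * V := by rw [hz.1.sa, hz.1.idem]
      _ = _ := by rw [← hz.2 _ (star_mem hVM), mul_assoc]
  · have hz := central_one_sub hcc
    rw [mul_assoc, ← mul_assoc q, ← hz.2 q hq.1, mul_assoc, hqV, ← mul_assoc, hz.1.idem]
  · rw [sub_sub_cancel]
    have e1 : c * q = c * (V * star V) := by
      rw [← hcc.2 _ hq1.1, mul_sub, sub_eq_zero] at hqc
      exact hqc
    refine ⟨c * star V, mul_mem hcc.1.1 (star_mem hVM), ?_, ?_⟩
    · rw [e1]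
      calc star (c * star V) * (c * star V) = V * (star c * c) * star V := by
            simp only [star_mul, star_star, mul_assoc]
        _ = V * c * star V := by rw [hcc.1.sa, hcc.1.idem]
        _ = _ := by rw [← hcc.2 _ hVM, mul_assoc]
    · rw [mul_assoc, ← mul_assoc p, ← hcc.2 p hp.1, mul_assoc, hpV, ← mul_assoc, hcc.1.idem]

end PQ

namespace PQ

theorem add_pi {a b : H →L[ℂ] H} (h : star a * b = 0) :
    star (a + b) * (a + b) = star a * a + star b * b := by
  have h' : star b * a = 0 := by
    have := congrArg star h
    rwa [star_mul, star_star, star_zero] at this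
  rw [star_add, add_mul, mul_add, mul_add, h, h']
  abel

theorem add_pi' {a b : H →L[ℂ] H} (h : a * star b = 0) :
    (a + b) * star (a + b) = a * star a + b * star b := by
  have h' : b * star a = 0 := by
    have := congrArg star h
    rwa [star_mul, star_star, star_zero] at this
  rw [star_add, add_mul, mul_add, mul_add, h, h']
  abel

theorem psub_sum {M : VonNeumannAlgebra H} {ι : Type*} (x p : ι → H →L[ℂ] H) {P q : H →L[ℂ] H}
    (hx : ∀ i, x i ∈ M) (hp : ∀ i, IsProjIn M (p i)) (ho : Pairwise fun i j => p i * p j = 0)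
    (hxp : ∀ i, star (x i) * x i = p i) (hxo : Pairwise fun i j => star (x i) * x j = 0)
    (hq : ∀ i, q * x i = x i) (hP : ∀ ξ, HasSum (fun i => p i ξ) (P ξ)) : PSub M P q := by
  have hxm : ∀ i, x i * p i = x i := fun i => pi_mul (hxp i) (hp i).idem
  obtain ⟨X, hXM, hX, hX', hXX, -⟩ := pi_sum (M := M) x hx (fun i => by rw [hxp, hxm]) hxo (by
    intro i j hij
    have : star (x j) = p j * star (x j) := by
      have := congrArg star (hxm j)
      rw [star_mul, (hp j).sa] at this
      exact this.symm
    rw [← hxm i, this, mul_assoc, ← mul_assoc (p i), ho hij]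
    simp)
  refine ⟨X, hXM, ?_, ?_⟩
  · refine sum_unique hXX ?_
    simpa only [hxp] using hP
  · refine sum_unique (sum_mul_left hX q) ?_
    simpa only [hq] using hX

theorem psub_central_sum {M : VonNeumannAlgebra H} {ι : Type*} (z : ι → H →L[ℂ] H)
    {w p q : H →L[ℂ] H} (hp : IsProjIn M p) (hq : IsProjIn M q)
    (hz : ∀ i, IsCentralProj M (z i)) (ho : Pairwise fun i j => z i * z j = 0)
    (hw : ∀ ξ, HasSum (fun i => z i ξ) (w ξ)) (h : ∀ i, PSub M (z i * p) (z i * q)) :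
    PSub M (w * p) (w * q) := by
  choose v hv h1 h2 using h
  have hzv : ∀ i, z i * v i = v i := fun i => by
    rw [← h2, ← mul_assoc, ← mul_assoc, (hz i).1.idem]
  have hwz : ∀ i, w * z i = z i := fun i => by
    rw [sum_single (sum_mul_right hw (z i)) i fun j hj => ho hj, (hz i).1.idem]
  have hwM : w ∈ M := sum_mem (fun i => (hz i).1.1) hw
  refine psub_sum v (fun i => z i * p) hv (fun i => central_mul (hz i) hp) ?_ h1 ?_ ?_
    (sum_mul_right hw p)
  · intro i j hij
    rw [mul_assoc, ← mul_assoc p, ← (hz j).2 p hp.1, ← mul_assoc, ← mul_assoc, ho hij]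
    simp
  · intro i j hij
    rw [← hzv i, ← hzv j, star_mul, (hz i).1.sa, mul_assoc, ← mul_assoc (z i), ho hij]
    simp
  · intro i
    nth_rewrite 1 [← h2]
    have : w * q * (z i * q * v i) = w * (q * z i) * q * v i := by simp only [mul_assoc]
    rw [this, ← (hz i).2 q hq.1, ← mul_assoc, hwz, mul_assoc (z i), hq.idem, h2]

theorem psub_two {M : VonNeumannAlgebra H} {z p q : H →L[ℂ] H} (hp : IsProjIn M p) (hq : IsProjIn M q)
    (hz : IsCentralProj M z) (h1 : PSub M (z * p) (z * q)) (h2 : PSub M ((1 - z) * p) ((1 - z) * q)) :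
    PSub M p q := by
  have e : z * (1 - z) = 0 := by rw [mul_sub, mul_one, hz.1.idem, sub_self]
  have e' : (1 - z) * z = 0 := by rw [sub_mul, one_mul, hz.1.idem, sub_self]
  have := psub_central_sum (M := M) (w := 1) (fun b : Bool => if b then z else 1 - z) hp hq
    (by rintro (_ | _); exacts [central_one_sub hz, hz])
    (by rintro (_ | _) (_ | _) h <;> simp_all) (by
      intro ξ
      have := hasSum_fintype (fun b : Bool => (if b then z else 1 - z : H →L[ℂ] H) ξ)
      simpa using this) (by rintro (_ | _); exacts [h2, h1])
  simpa using this

theorem mvn_two {M : VonNeumannAlgebra H} {z p q : H →L[ℂ] H}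
    (hz : IsCentralProj M z) (h1 : MvNEquiv M (z * p) (z * q))
    (h2 : MvNEquiv M ((1 - z) * p) ((1 - z) * q)) (hp : IsProjIn M p) :
    MvNEquiv M p q := by
  obtain ⟨v, hv, a1, a2⟩ := mvn_iff.1 h1
  obtain ⟨w, hw, b1, b2⟩ := mvn_iff.1 h2
  have hz' := central_one_sub hz
  have e : z * (1 - z) = 0 := by rw [mul_sub, mul_one, hz.1.idem, sub_self]
  have hvz : v = z * v := by
    have := pi_mul a1 (central_mul hz hp).idem
    rw [← this]
    conv_rhs => rw [hz.2 _ (mul_mem hv (mul_mem hz.1.1 hp.1)), mul_assoc, mul_assoc, ← hz.2 p hp.1,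
      ← mul_assoc z z, hz.1.idem]
  have hwz : w = (1 - z) * w := by
    have := pi_mul b1 (central_mul hz' hp).idem
    rw [← this]
    conv_rhs => rw [hz'.2 _ (mul_mem hw (mul_mem hz'.1.1 hp.1)), mul_assoc, mul_assoc, ← hz'.2 p hp.1,
      ← mul_assoc (1 - z) (1 - z), hz'.1.idem]
  have c1 : star v * w = 0 := by
    rw [hvz, hwz, star_mul, hz.1.sa, mul_assoc, ← mul_assoc z, e]; simp
  have c2 : v * star w = 0 := by
    rw [hvz, hwz, star_mul, hz'.1.sa, ← hz'.2 _ (star_mem hw), hz.2 v hv, mul_assoc, ← mul_assoc z, e]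
    simp
  refine mvn_iff.2 ⟨v + w, add_mem hv hw, ?_, ?_⟩
  · rw [add_pi c1, a1, b1, sub_mul]; simp
  · rw [add_pi' c2, a2, b2, sub_mul]; simp

/-- finiteness, via partial isometries -/
def Fin' (M : VonNeumannAlgebra H) (q : H →L[ℂ] H) : Prop :=
  ∀ v ∈ M, star v * v = q → q * v = v → v * star v = q

theorem canc_half {M : VonNeumannAlgebra H} {z q e f : H →L[ℂ] H} (hz : IsCentralProj M z)
    (hq : IsProjIn M q) (he : IsProjIn M e) (hf : IsProjIn M f) (hqe : q * e = e) (hqf : q * f = f)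
    (hfin : Fin' M q) (hef : MvNEquiv M e f) (h : PSub M (z * (q - e)) (z * (q - f))) :
    MvNEquiv M (z * (q - e)) (z * (q - f)) := by
  obtain ⟨t, ht, t1, t2⟩ := h
  obtain ⟨v, hv, v1, v2⟩ := mvn_iff.1 hef
  have hz' := central_one_sub hz
  have ezz : z * (1 - z) = 0 := by rw [mul_sub, mul_one, hz.1.idem, sub_self]
  have hve : v * e = v := pi_mul v1 he.idem
  have hfv : f * v = v := by rw [← v2, mul_assoc, v1, hve]
  have hqa : IsProjIn M (q - e) := sub_proj hq he hqe
  have hqb : IsProjIn M (q - f) := sub_proj hq hf hqf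
  have hza := central_mul hz hqa
  have hzt : z * t = t := by
    nth_rewrite 1 [← t2]
    rw [← mul_assoc, ← mul_assoc, hz.1.idem, t2]
  have hbt : (q - f) * t = t := by
    nth_rewrite 1 [← t2]
    rw [hz.2 _ hqb.1, ← mul_assoc, ← mul_assoc, hqb.idem, ← hz.2 _ hqb.1, t2]
  have hta : t * (z * (q - e)) = t := pi_mul t1 hza.idem
  have hta' : t * (q - e) = t := by
    nth_rewrite 1 [← hta]
    rw [mul_assoc, mul_assoc, hqa.idem, hta]
  have hft : f * t = 0 := by
    rw [← hbt, ← mul_assoc, mul_sub, le_symm hq hf hqf, hf.idem]; simp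
  have hte : t * e = 0 := by
    rw [← hta', mul_assoc, sub_mul, hqe, he.idem]; simp
  have hvt : star v * t = 0 := by
    rw [← hfv, star_mul, hf.sa, mul_assoc, hft, mul_zero]
  have htv : t * star v = 0 := by
    rw [← hve, star_mul, he.sa, ← mul_assoc, hte, zero_mul]
  have hvt' : v * star t = 0 := by
    have := congrArg star htv
    rwa [star_mul, star_star, star_zero] at this
  have d1 : star (z * v) * t = 0 := by
    rw [star_mul, hz.1.sa, mul_assoc, hzt, hvt]
  have d2 : z * v * star t = 0 := by rw [mul_assoc, hvt', mul_zero]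
  have hA : z * (z * v + t) = z * v + t := by
    rw [mul_add, hzt, ← mul_assoc, hz.1.idem]
  have hAM : z * v + t ∈ M := add_mem (mul_mem hz.1.1 hv) ht
  have hBM : (1 - z) * q ∈ M := mul_mem hz'.1.1 hq.1
  have d3 : star (z * v + t) * ((1 - z) * q) = 0 := by
    rw [← hA, star_mul, hz.1.sa, mul_assoc, ← mul_assoc z, ezz]; simp
  have d4 : (z * v + t) * star ((1 - z) * q) = 0 := by
    rw [(central_mul hz' hq).sa, ← hA, hz.2 _ hAM, mul_assoc, ← mul_assoc z, ezz]; simp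
  have w1 : star (z * v) * (z * v) = z * e := by
    rw [star_mul, hz.1.sa, mul_assoc, ← mul_assoc z z, hz.1.idem, hz.2 v hv, ← mul_assoc, v1,
      hz.2 e he.1]
  have w2 : (z * v) * star (z * v) = z * f := by
    rw [star_mul, hz.1.sa, ← hz.2 _ (star_mem hv), hz.2 v hv, mul_assoc, ← mul_assoc z z, hz.1.idem,
      hz.2 _ (star_mem hv), ← mul_assoc, v2, hz.2 f hf.1]
  have w3 : star ((1 - z) * q) * ((1 - z) * q) = (1 - z) * q := by
    rw [(central_mul hz' hq).sa, (central_mul hz' hq).idem]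
  have w4 : ((1 - z) * q) * star ((1 - z) * q) = (1 - z) * q := by
    rw [(central_mul hz' hq).sa, (central_mul hz' hq).idem]
  have key := hfin (z * v + t + (1 - z) * q) (add_mem hAM hBM) (by
      rw [add_pi d3, add_pi d1, w1, t1, w3]; noncomm_ring) (by
      have a1 : q * (z * v) = z * v := by
        rw [← mul_assoc, ← hz.2 q hq.1, mul_assoc, ← hfv, ← mul_assoc q, hqf]
      have a2 : q * t = t := by
        rw [← hbt, ← mul_assoc, mul_sub, hq.idem, hqf]
      have a3 : q * ((1 - z) * q) = (1 - z) * q := by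
        rw [← mul_assoc, ← hz'.2 q hq.1, mul_assoc, hq.idem]
      rw [mul_add, mul_add, a1, a2, a3])
  rw [add_pi' d4, add_pi' d2, w2, w4] at key
  refine mvn_iff.2 ⟨t, ht, t1, ?_⟩
  have : t * star t = q - z * f - (1 - z) * q := by
    calc _ = (z * f + t * star t + (1 - z) * q) - z * f - (1 - z) * q := by abel
      _ = _ := by rw [key]
  rw [this]; noncomm_ring

theorem cancellation {M : VonNeumannAlgebra H} {q e f : H →L[ℂ] H}
    (hq : IsProjIn M q) (he : IsProjIn M e) (hf : IsProjIn M f) (hqe : q * e = e) (hqf : q * f = f)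
    (hfin : Fin' M q) (hef : MvNEquiv M e f) : MvNEquiv M (q - e) (q - f) := by
  obtain ⟨z, hz, h1, h2⟩ := comparison (sub_proj hq he hqe) (sub_proj hq hf hqf)
  exact mvn_two hz (canc_half hz hq he hf hqe hqf hfin hef h1)
    (mvn_symm (canc_half (central_one_sub hz) hq hf he hqf hqe hfin (mvn_symm hef) h2))
    (sub_proj hq he hqe)

theorem extension {M : VonNeumannAlgebra H} {q g g' V : H →L[ℂ] H}
    (hq : IsProjIn M q) (hg : IsProjIn M g) (hg' : IsProjIn M g') (hgg : g' * g = g)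
    (hfin : Fin' M q) (hV : V ∈ M) (hV1 : star V * V = g) (hV2 : q * V = V) (h : PSub M g' q) :
    ∃ V' ∈ M, star V' * V' = g' ∧ q * V' = V' ∧ V' * g = V := by
  obtain ⟨w, hu, u1, u2⟩ := h
  have hgg' := le_symm hg' hg hgg
  have hVg : V * g = V := pi_mul hV1 hg.idem
  have huM := mul_mem hu hg.1
  have s1 : star (w * g) * (w * g) = g := by
    rw [star_mul, hg.sa, mul_assoc, ← mul_assoc (star w), u1, hgg, hg.idem]
  have he : IsProjIn M ((w * g) * star (w * g)) := range_proj huM (by rw [s1, hg.idem])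
  have hf : IsProjIn M (V * star V) := range_proj hV (by rw [hV1, hg.idem])
  have hqe : q * ((w * g) * star (w * g)) = (w * g) * star (w * g) := by
    rw [← mul_assoc, ← mul_assoc, u2]
  have hqf : q * (V * star V) = V * star V := by rw [← mul_assoc, hV2]
  have hef : MvNEquiv M ((w * g) * star (w * g)) (V * star V) := by
    refine mvn_trans he hf (mvn_symm (mvn_iff.2 ⟨w * g, huM, s1, rfl⟩)) (mvn_iff.2 ⟨V, hV, hV1, rfl⟩)
  obtain ⟨t, ht, t1, t2⟩ := mvn_iff.1 (cancellation hq he hf hqe hqf hfin hef)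
  have hd := sub_proj hg' hg hgg
  have ht3 : t * (q - (w * g) * star (w * g)) = t := pi_mul t1 (sub_proj hq he hqe).idem
  have hqft : (q - V * star V) * t = t := by rw [← t2, mul_assoc, t1, ht3]
  have hVt : star V * t = 0 := by
    have : star V * (V * star V) = star V := by
      rw [← mul_assoc, hV1]
      have := congrArg star hVg
      rwa [star_mul, hg.sa] at this
    have hVq : star V * q = star V := by
      have := congrArg star hV2
      rwa [star_mul, hq.sa] at this
    rw [← hqft, ← mul_assoc, mul_sub, this, hVq, sub_self, zero_mul]
  have hy : (q - (w * g) * star (w * g)) * (w * (g' - g)) = w * (g' - g) := by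
    rw [sub_mul, ← mul_assoc, u2]
    have : w * g * star (w * g) * (w * (g' - g)) = w * g * (g * (star w * w) * (g' - g)) := by
      rw [star_mul, hg.sa]; simp only [mul_assoc]
    have h0 : g * (g' - g) = 0 := by rw [mul_sub, hgg', hg.idem, sub_self]
    rw [this, u1, hgg', h0]; simp
  have hyy : star (w * (g' - g)) * (w * (g' - g)) = g' - g := by
    rw [star_mul, hd.sa, mul_assoc, ← mul_assoc (star w), u1, mul_sub, hg'.idem, hgg, hd.idem]
  refine ⟨V + t * (w * (g' - g)), add_mem hV (mul_mem ht (mul_mem hu hd.1)), ?_, ?_, ?_⟩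
  · rw [add_pi (by rw [← mul_assoc, hVt, zero_mul]), hV1, star_mul, mul_assoc, ← mul_assoc (star t),
      t1, hy, hyy]
    abel
  · have hqt : q * t = t := by
      rw [← hqft, ← mul_assoc, mul_sub, hq.idem, hqf]
    rw [mul_add, hV2, ← mul_assoc, hqt]
  · rw [add_mul, hVg, mul_assoc, mul_assoc, sub_mul, hgg, hg.idem]; simp

theorem increasing {M : VonNeumannAlgebra H} {q p : H →L[ℂ] H} (g : ℕ → H →L[ℂ] H)
    (hq : IsProjIn M q) (hp : IsProjIn M p) (hg : ∀ n, IsProjIn M (g n))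
    (hmono : ∀ n, g (n + 1) * g n = g n) (hpg : ∀ n, p * g n = g n)
    (hsup : ∀ y : H →L[ℂ] H, (∀ n, y * g n = 0) → y * p = 0)
    (hfin : Fin' M q) (h : ∀ n, PSub M (g n) q) : PSub M p q := by
  have step : ∀ (n : ℕ) (V : {V : H →L[ℂ] H // V ∈ M ∧ star V * V = g n ∧ q * V = V}),
      ∃ V' : {V : H →L[ℂ] H // V ∈ M ∧ star V * V = g (n + 1) ∧ q * V = V}, V'.1 * g n = V.1 := by
    rintro n ⟨V, a, b, c⟩
    obtain ⟨V', a', b', c', d'⟩ := extension hq (hg n) (hg (n + 1)) (hmono n) hfin a b c (h (n + 1))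
    exact ⟨⟨V', a', b', c'⟩, d'⟩
  choose nx hnx using step
  obtain ⟨V0, hV0⟩ := h 0
  let F : ∀ n, {V : H →L[ℂ] H // V ∈ M ∧ star V * V = g n ∧ q * V = V} := fun n =>
    Nat.rec ⟨V0, hV0⟩ (fun n V => nx n V) n
  have hF : ∀ n, (F (n + 1)).1 * g n = (F n).1 := fun n => hnx n (F n)
  have hle : ∀ i k, g (i + k) * g i = g i := by
    intro i k
    induction k with
    | zero => exact (hg i).idem
    | succ k ih =>
      rw [← ih, ← mul_assoc, ← add_assoc, hmono]
  have hFle : ∀ i k, (F (i + k)).1 * g i = (F i).1 := by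
    intro i k
    induction k with
    | zero => exact pi_mul (F i).2.2.1 (hg i).idem
    | succ k ih =>
      rw [← add_assoc, ← ih, ← hF (i + k), mul_assoc, hle]
  have hle' : ∀ i k, g i * g (i + k) = g i := fun i k => le_symm (hg _) (hg _) (hle i k)
  let d : ℕ → H →L[ℂ] H := fun n => Nat.casesOn n (g 0) (fun n => g (n + 1) - g n)
  have hd : ∀ n, IsProjIn M (d n) := by
    rintro (_ | n)
    · exact hg 0
    · exact sub_proj (hg _) (hg _) (hmono n)
  have hgd : ∀ n, g n * d n = d n := by
    rintro (_ | n)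
    · exact (hg 0).idem
    · change g (n + 1) * (g (n + 1) - g n) = g (n + 1) - g n
      rw [mul_sub, (hg _).idem, hmono]
  have hdo : ∀ i k, d i * d (i + k + 1) = 0 := by
    intro i k
    rw [← le_symm (hg i) (hd i) (hgd i), mul_assoc]
    change d i * (g i * (g (i + k + 1) - g (i + k))) = 0
    rw [mul_sub, hle', add_assoc, hle', sub_self, mul_zero]
  have hdo' : Pairwise fun i j => d i * d j = 0 := by
    intro i j hij
    rcases lt_or_gt_of_ne hij with hlt | hlt
    · obtain ⟨k, rfl⟩ := Nat.exists_eq_add_of_lt hlt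
      exact hdo i k
    · obtain ⟨k, rfl⟩ := Nat.exists_eq_add_of_lt hlt
      exact orth_symm (hd j) (hd (j + k + 1)) (hdo j k)
  obtain ⟨P, hP, hPs, hP1, hP2⟩ := proj_sum (M := M) d hd hdo'
  have hPg : ∀ n, P * g n = g n := by
    intro n
    induction n with
    | zero => exact hP1 0
    | succ n ih =>
      have : g (n + 1) = d (n + 1) + g n := by
        change g (n + 1) = (g (n + 1) - g n) + g n
        abel
      rw [this, mul_add, hP1 (n + 1), ih]
  have hPp : p = P := by
    have h1 : (1 - P) * p = 0 := hsup _ fun n => by rw [sub_mul, one_mul, hPg, sub_self]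
    have h2 : p * P = P := by
      refine sum_unique (sum_mul_left hPs p) ?_
      have : ∀ i, p * d i = d i := fun i => by rw [← hgd, ← mul_assoc, hpg]
      simpa only [this] using hPs
    rw [sub_mul, one_mul, sub_eq_zero, le_symm hp hP h2] at h1
    exact h1
  have hstar : ∀ i k, star ((F i).1 * d i) * ((F (i + k)).1 * d (i + k)) = d i * d (i + k) := by
    intro i k
    rw [← hFle i k]
    calc star ((F (i + k)).1 * g i * d i) * ((F (i + k)).1 * d (i + k))
        = d i * g i * (star (F (i + k)).1 * (F (i + k)).1) * d (i + k) := by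
          simp only [star_mul, mul_assoc, (hd i).sa, (hg i).sa]
      _ = d i * d (i + k) := by
          rw [(F (i + k)).2.2.1, mul_assoc, hgd, le_symm (hg i) (hd i) (hgd i)]
  rw [hPp]
  refine psub_sum (fun n => (F n).1 * d n) d (fun n => mul_mem (F n).2.1 (hd n).1) hd hdo' ?_ ?_ ?_ hPs
  · intro i
    have := hstar i 0
    rw [add_zero, (hd i).idem] at this
    exact this
  · intro i j hij
    rcases lt_or_gt_of_ne hij with hlt | hlt
    · obtain ⟨k, rfl⟩ := Nat.exists_eq_add_of_lt hlt
      exact (hstar i (k + 1)).trans (hdo i k)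
    · obtain ⟨k, rfl⟩ := Nat.exists_eq_add_of_lt hlt
      have := congrArg star ((hstar j (k + 1)).trans (hdo j k))
      rw [star_mul, star_star, star_zero] at this
      exact this
  · intro i
    rw [← mul_assoc, (F i).2.2.2]

theorem wold {M : VonNeumannAlgebra H} {x p d : H →L[ℂ] H} (hd : IsProjIn M d) (hx : x ∈ M)
    (h1 : star x * x = p) (h2 : p * x = x) (hpd : p * d = d) (hdx : d * x = 0) :
    ∃ y : ℕ → H →L[ℂ] H, (∀ n, y n ∈ M) ∧ (∀ n, star (y n) * y n = d) ∧
      (∀ n, p * y n = y n) ∧ (Pairwise fun i j => star (y i) * y j = 0) ∧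
      y 0 = d ∧ (∀ n, y (n + 1) = x * y n) := by
  let y : ℕ → H →L[ℂ] H := fun n => Nat.rec d (fun _ t => x * t) n
  have hy0 : y 0 = d := rfl
  have hys : ∀ n, y (n + 1) = x * y n := fun n => rfl
  have hpy : ∀ n, p * y n = y n := by
    rintro (_ | n)
    · exact hpd
    · rw [hys, ← mul_assoc, h2]
  have hyM : ∀ n, y n ∈ M := by
    intro n
    induction n with
    | zero => exact hd.1
    | succ n ih => exact mul_mem hx ih
  have hyy : ∀ i j, star (y (i + 1)) * y (j + 1) = star (y i) * y j := by
    intro i j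
    rw [hys, hys, star_mul, mul_assoc, ← mul_assoc (star x), h1, hpy]
  have hyo : ∀ i k, star (y i) * y (i + k + 1) = 0 := by
    intro i
    induction i with
    | zero =>
      intro k
      rw [zero_add, hy0, hys, hd.sa, ← mul_assoc, hdx, zero_mul]
    | succ i ih =>
      intro k
      rw [show i + 1 + k + 1 = (i + k + 1) + 1 by ring, hyy i (i + k + 1), ih]
  refine ⟨y, hyM, ?_, hpy, ?_, rfl, hys⟩
  · intro n
    induction n with
    | zero => rw [hy0, hd.sa, hd.idem]
    | succ n ih => rw [hyy, ih]
  · intro i j hij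
    rcases lt_or_gt_of_ne hij with hlt | hlt
    · obtain ⟨k, rfl⟩ := Nat.exists_eq_add_of_lt hlt
      exact hyo i k
    · obtain ⟨k, rfl⟩ := Nat.exists_eq_add_of_lt hlt
      have := congrArg star (hyo j k)
      rw [star_mul, star_star, star_zero] at this
      exact this

/-- Schröder–Bernstein -/
theorem schroeder {M : VonNeumannAlgebra H} {p q : H →L[ℂ] H} (hp : IsProjIn M p) (hq : IsProjIn M q)
    (h : PSub M p q) (h' : PSub M q p) : MvNEquiv M p q := by
  obtain ⟨v, hv, v1, v2⟩ := h
  obtain ⟨w, hw, w1, w2⟩ := h'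
  have x1 : star (w * v) * (w * v) = p := by
    rw [star_mul, mul_assoc, ← mul_assoc (star w), w1, v2, v1]
  have hvp : v * p = v := pi_mul v1 hp.idem
  have hwq : w * q = w := pi_mul w1 hq.idem
  have hww : IsProjIn M (w * star w) := range_proj hw (by rw [w1, hq.idem])
  have hpww : p * (w * star w) = w * star w := by rw [← mul_assoc, w2]
  have hd : IsProjIn M (p - w * star w) := sub_proj hp hww hpww
  have hpd : p * (p - w * star w) = p - w * star w := by rw [mul_sub, hp.idem, hpww]
  have hdw : (p - w * star w) * w = 0 := by rw [sub_mul, w2, mul_assoc, w1, hwq, sub_self]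
  obtain ⟨y, hyM, hyy, hpy, hyo, hy0, hys⟩ := wold hd (mul_mem hw hv) x1 (by rw [← mul_assoc, w2]) hpd
    (by rw [← mul_assoc, hdw, zero_mul])
  set x := w * v with hx
  set d := p - w * star w with hdd
  have hen : ∀ n, IsProjIn M (y n * star (y n)) := fun n =>
    range_proj (hyM n) (by rw [hyy, hd.idem])
  obtain ⟨e, he, hes, he1, he2⟩ := proj_sum (M := M) (fun n => y n * star (y n)) hen (by
    intro i j hij
    rw [mul_assoc, ← mul_assoc (star (y i)), hyo hij]; simp)
  have hpe : p * e = e := by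
    refine sum_unique (sum_mul_left hes p) ?_
    simpa only [← mul_assoc, hpy] using hes
  have hep := le_symm hp he hpe
  have hy00 : y 0 * star (y 0) = d := by rw [hy0, hd.sa, hd.idem]
  have hed : e * d = d := by rw [← hy00]; exact he1 0
  have hde := le_symm he hd hed
  have hxe : x * e * star x = e - d := by
    have a : ∀ ξ, HasSum (fun n => (y (n + 1) * star (y (n + 1))) ξ) ((x * e * star x) ξ) := by
      have := sum_mul_right (sum_mul_left hes x) (star x)
      intro ξ
      have h3 := this ξ
      simpa only [hys, star_mul, mul_assoc] using h3
    have b : ∀ ξ, HasSum (fun n => (y n * star (y n)) ξ) ((d + x * e * star x) ξ) := by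
      intro ξ
      have := (a ξ).zero_add (f := fun n => (y n * star (y n)) ξ)
      rw [hy00] at this
      exact this
    rw [eq_sub_iff_add_eq, add_comm]; exact (sum_unique hes b).symm
  have hxp : x * p = x := pi_mul x1 hp.idem
  have hpx : p * x = x := by rw [hx, ← mul_assoc, w2]
  have hqv : star v * q = star v := by
    have := congrArg star v2
    rwa [star_mul, hq.sa] at this
  have hpe' : p - e = w * (q - v * e * star v) * star w := by
    have : w * (q - v * e * star v) * star w = w * q * star w - x * e * star x := by
      rw [hx, star_mul]; noncomm_ring
    rw [this, hxe, hwq, hdd]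
    abel
  have hpeP := sub_proj hp he hpe
  have hdpe : d * (p - e) = 0 := by rw [mul_sub, le_symm hp hd hpd, hde, sub_self]
  have hepe : e * (p - e) = 0 := by rw [mul_sub, hep, he.idem, sub_self]
  have hpee : (p - e) * e = 0 := by rw [sub_mul, hpe, he.idem, sub_self]
  have hxe2 : x * e = (e - d) * x := by
    rw [← hxe, mul_assoc _ (star x) x, x1, mul_assoc x e p, hep]
  have hcr : star (v * e) * (star w * (p - e)) = 0 := by
    have : star (v * e) * (star w * (p - e)) = star (x * e) * (p - e) := by
      rw [hx]; simp only [star_mul, mul_assoc]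
    rw [this, hxe2, star_mul, star_sub, he.sa, hd.sa, mul_assoc, sub_mul, hepe, hdpe]; simp
  have hcr' : v * e * star (star w * (p - e)) = 0 := by
    rw [star_mul, star_star, hpeP.sa, mul_assoc, ← mul_assoc e, hepe]; simp
  have hwpe : star w * (p - e) * w = q - v * e * star v := by
    rw [hpe']
    have h0 : q * (q - v * e * star v) * q = q - v * e * star v := by
      rw [mul_sub, hq.idem, ← mul_assoc, ← mul_assoc, v2, sub_mul, hq.idem, mul_assoc _ _ q, hqv]
    calc star w * (w * (q - v * e * star v) * star w) * w
        = (star w * w) * (q - v * e * star v) * (star w * w) := by noncomm_ring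
      _ = _ := by rw [w1, h0]
  refine mvn_iff.2 ⟨v * e + star w * (p - e), add_mem (mul_mem hv he.1)
    (mul_mem (star_mem hw) hpeP.1), ?_, ?_⟩
  · rw [add_pi hcr]
    have a1 : star (v * e) * (v * e) = e := by
      rw [star_mul, he.sa, mul_assoc, ← mul_assoc (star v), v1, hpe, he.idem]
    have a2 : star (star w * (p - e)) * (star w * (p - e)) = p - e := by
      have : w * star w = p - d := by rw [hdd]; abel
      have h3 : p * (p - e) = p - e := by rw [mul_sub, hp.idem, hpe]
      rw [star_mul, hpeP.sa, star_star, mul_assoc, ← mul_assoc w, this, sub_mul p d, hdpe, sub_zero,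
        h3, hpeP.idem]
    rw [a1, a2]; abel
  · rw [add_pi' hcr']
    have a1 : v * e * star (v * e) = v * e * star v := by
      rw [star_mul, he.sa, mul_assoc, ← mul_assoc e, he.idem, mul_assoc]
    have a2 : star w * (p - e) * star (star w * (p - e)) = q - v * e * star v := by
      rw [star_mul, star_star, hpeP.sa, ← mul_assoc, mul_assoc _ (p - e) (p - e), hpeP.idem, hwpe]
    rw [a1, a2]; abel

end PQ

namespace PQ

theorem app {x y : H →L[ℂ] H} (h : x = y) (ξ : H) : x ξ = y ξ := by rw [h]

def Sep (M : VonNeumannAlgebra H) (e : H →L[ℂ] H) : Prop :=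
  ∃ C : Set H, C.Countable ∧ ∀ x ∈ M, (∀ ξ ∈ C, x ξ = 0) → x * e = 0

theorem Sep.of_psub {M : VonNeumannAlgebra H} {p q : H →L[ℂ] H} (hq : IsProjIn M q)
    (h : PSub M p q) (hs : Sep M q) : Sep M p := by
  obtain ⟨v, hv, v1, v2⟩ := h
  obtain ⟨C, hC, hC'⟩ := hs
  refine ⟨(fun ξ => (star v : H →L[ℂ] H) ξ) '' C, hC.image _, fun x hx hxC => ?_⟩
  have h1 := hC' (x * star v) (mul_mem hx (star_mem hv)) fun ξ hξ => hxC _ ⟨ξ, hξ, rfl⟩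
  have h2 : star v * q = star v := by
    have := congrArg star v2
    rwa [star_mul, hq.sa] at this
  rw [mul_assoc, h2] at h1
  rw [← v1, ← mul_assoc, h1, zero_mul]

theorem Sep.sum {M : VonNeumannAlgebra H} {ι : Type*} [Countable ι] {p : ι → H →L[ℂ] H} {P : H →L[ℂ] H}
    (hp : ∀ i, Sep M (p i)) (hP : ∀ ξ, HasSum (fun i => p i ξ) (P ξ)) : Sep M P := by
  choose C hC hC' using hp
  refine ⟨⋃ i, C i, Set.countable_iUnion hC, fun x hx hxC => ?_⟩
  refine sum_zero (sum_mul_left hP x) fun i => hC' i x hx fun ξ hξ => hxC ξ (Set.mem_iUnion.2 ⟨i, hξ⟩)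

theorem countable_of_sep {M : VonNeumannAlgebra H} {e : H →L[ℂ] H} (hs : Sep M e) {ι : Type*}
    (q : ι → H →L[ℂ] H) (hq : ∀ i, IsProjIn M (q i)) (h0 : ∀ i, q i ≠ 0) (he : ∀ i, q i * e = q i)
    (ho : Pairwise fun i j => q i * q j = 0) : Countable ι := by
  obtain ⟨C, hC, hC'⟩ := hs
  obtain ⟨P, -, hP, -, -⟩ := proj_sum q hq ho
  have : (Set.univ : Set ι) ⊆ ⋃ ξ ∈ C, Function.support (fun i => q i ξ) := by
    intro i _
    by_contra hc
    simp only [Set.mem_iUnion, Function.mem_support, not_exists, not_not] at hc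
    exact h0 i ((he i).symm.trans (hC' (q i) (hq i).1 hc))
  have h2 : (⋃ ξ ∈ C, Function.support (fun i => q i ξ)).Countable :=
    hC.biUnion fun ξ _ => (hP ξ).summable.countable_support
  exact Set.countable_univ_iff.1 (h2.mono this)

theorem Sep.sigma {M : VonNeumannAlgebra H} {e : H →L[ℂ] H} (hs : Sep M e) : SigmaFiniteProj M e := by
  intro S hS ho
  have := countable_of_sep hs (fun q : S => q.1) (fun q => (hS q.1 q.2).1) (fun q => (hS q.1 q.2).2.1)
    (fun q => (hS q.1 q.2).2.2.1) (fun a b hab => ho a.2 b.2 (fun h => hab (Subtype.ext h)))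
  exact Set.countable_coe_iff.1 this

theorem cyclic_exists {M : VonNeumannAlgebra H} {e : H →L[ℂ] H} (h0 : e ≠ 0) (he : IsProjIn M e) :
    ∃ q, IsProjIn M q ∧ q ≠ 0 ∧ e * q = q ∧ Sep M q := by
  obtain ⟨η, hη⟩ : ∃ η, e η ≠ 0 := by
    by_contra hc
    push Not at hc
    exact h0 (ContinuousLinearMap.ext hc)
  set ξ := e η with hξ
  let K : Submodule ℂ H := (Submodule.span ℂ {η | ∃ x ∈ M.commutant, η = x ξ}).topologicalClosure
  have hmem : ∀ x ∈ M.commutant, x ξ ∈ K := fun x hx =>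
    Submodule.le_topologicalClosure _ (Submodule.subset_span ⟨x, hx, rfl⟩)
  have hmin : ∀ (y : H →L[ℂ] H) (L : Submodule ℂ H), IsClosed (L : Set H) →
      (∀ x ∈ M.commutant, y (x ξ) ∈ L) → ∀ η ∈ K, y η ∈ L := by
    intro y L hL h
    have : K ≤ L.comap (y : H →ₗ[ℂ] H) := by
      apply Submodule.topologicalClosure_minimal
      · rw [Submodule.span_le]
        rintro _ ⟨x, hx, rfl⟩
        exact h x hx
      · exact hL.preimage y.continuous
    exact this
  have hKc : IsClosed (K : Set H) := Submodule.isClosed_topologicalClosure _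
  have hcyc : ∀ x ∈ M, x ξ = 0 → x * K.starProjection = 0 := by
    intro x hx hxξ
    ext ζ
    have := hmin x ⊥ (by simp) (fun u hu => by
      have := app (comm_of_mem hx hu) ξ
      simp only [mul_apply_eq_comp] at this
      rw [← this, hxξ]; simp) _ (Submodule.starProjection_apply_mem K ζ)
    simpa using this
  refine ⟨K.starProjection, ?_, ?_, ?_, ?_⟩
  · apply proj_of_sub
    intro u hu
    apply hmin u K hKc
    intro x hx
    exact hmem (u * x) (mul_mem hu hx)
  · intro h
    have h1 : K.starProjection ξ = ξ :=
      Submodule.starProjection_eq_self_iff.2 (hmem 1 (one_mem _))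
    rw [h] at h1
    exact hη h1.symm
  · have h1 := hcyc (1 - e) (sub_mem (one_mem M) he.1) (by
      have := app he.idem η
      simp only [mul_apply_eq_comp] at this
      simp [hξ, this])
    rw [sub_mul, one_mul, sub_eq_zero] at h1
    exact h1.symm
  · exact ⟨{ξ}, Set.countable_singleton _, fun x hx h => hcyc x hx (h ξ rfl)⟩

theorem exhaust {M : VonNeumannAlgebra H} (e : H →L[ℂ] H) (Q : (H →L[ℂ] H) → Prop) :
    ∃ (S : Set (H →L[ℂ] H)) (P : H →L[ℂ] H), (∀ q ∈ S, IsProjIn M q ∧ q ≠ 0 ∧ e * q = q ∧ Q q) ∧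
      (S.Pairwise fun a b => a * b = 0) ∧ IsProjIn M P ∧ (∀ ξ, HasSum (fun q : S => q.1 ξ) (P ξ)) ∧
      e * P = P ∧ ∀ q, IsProjIn M q → q ≠ 0 → e * q = q → Q q → P * q ≠ 0 := by
  obtain ⟨S, h1, h2, h3⟩ := exists_maximal_family
    (fun q : H →L[ℂ] H => IsProjIn M q ∧ q ≠ 0 ∧ e * q = q ∧ Q q) (fun a b => a * b = 0 ∧ b * a = 0)
    (fun a b h => h.symm)
  obtain ⟨P, hP, hPs, hP1, hP2⟩ := proj_sum (M := M) (fun q : S => q.1) (fun q => (h1 q.1 q.2).1)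
    (fun a b hab => (h2 a.2 b.2 (fun h => hab (Subtype.ext h))).1)
  refine ⟨S, P, h1, fun a ha b hb hab => (h2 ha hb hab).1, hP, hPs, ?_, ?_⟩
  · refine sum_unique (sum_mul_left hPs e) ?_
    have : ∀ q : S, e * q.1 = q.1 := fun q => (h1 q.1 q.2).2.2.1
    simpa only [this] using hPs
  · intro q hq hq0 hqe hQ hPq
    have hb : ∀ b ∈ S, b * q = 0 := fun b hb => by
      have h4 : b * P = b := hP2 ⟨b, hb⟩
      rw [← h4, mul_assoc, hPq, mul_zero]
    have hqS := h3 q ⟨hq, hq0, hqe, hQ⟩ fun b hbS => ⟨hb b hbS, orth_symm (h1 b hbS).1 hq (hb b hbS)⟩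
    exact hq0 (hq.idem.symm.trans (hb q hqS))

theorem sep_of_sigma {M : VonNeumannAlgebra H} {e : H →L[ℂ] H} (he : IsProjIn M e)
    (hs : SigmaFiniteProj M e) : Sep M e := by
  obtain ⟨S, P, h1, h2, hP, hPs, heP, hmax⟩ := exhaust (M := M) e (Sep M)
  have hc : Countable S := Set.countable_coe_iff.2 (hs S (fun q hq => ⟨(h1 q hq).1, (h1 q hq).2.1,
    le_symm he (h1 q hq).1 (h1 q hq).2.2.1, (h1 q hq).2.2.1⟩) h2)
  have : e - P = 0 := by
    by_contra h0
    have hd := sub_proj he hP heP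
    obtain ⟨q, hq, hq0, hdq, hqs⟩ := cyclic_exists h0 hd
    refine hmax q hq hq0 ?_ hqs ?_
    · rw [← hdq, ← mul_assoc, mul_sub, he.idem, heP]
    · rw [← hdq, ← mul_assoc, mul_sub, le_symm he hP heP, hP.idem]; simp
  rw [sub_eq_zero.1 this]
  exact Sep.sum (fun q : S => (h1 q.1 q.2).2.2.2) hPs

theorem cs_ne {M : VonNeumannAlgebra H} {f c : H →L[ℂ] H} (h : IsCentralSupport M f c)
    (hf : f ≠ 0) : c ≠ 0 := by
  rintro rfl
  exact hf (by rw [← h.2.1, zero_mul])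

theorem central_sum {M : VonNeumannAlgebra H} {ι : Type*} {z : ι → H →L[ℂ] H} {w : H →L[ℂ] H}
    (hz : ∀ i, IsCentralProj M (z i)) (hw : IsProjIn M w) (hs : ∀ ξ, HasSum (fun i => z i ξ) (w ξ)) :
    IsCentralProj M w := by
  refine ⟨hw, fun x hx => ?_⟩
  refine sum_unique (sum_mul_right hs x) ?_
  have : ∀ i, z i * x = x * z i := fun i => (hz i).2 x hx
  simp only [this]
  exact sum_mul_left hs x

end PQ

namespace PQ

theorem inf_case {M : VonNeumannAlgebra H} {p q : H →L[ℂ] H} (hp : IsProjIn M p) (hq : IsProjIn M q)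
    (hs : Sep M p) (hinf : ¬ Fin' M q) :
    ∃ d z, d ≠ 0 ∧ q * d = d ∧ IsCentralSupport M d z ∧ PSub M (z * p) q := by
  unfold Fin' at hinf
  push Not at hinf
  obtain ⟨v, hv, v1, v2, v3⟩ := hinf
  have hvq : v * q = v := pi_mul v1 hq.idem
  have hvv : IsProjIn M (v * star v) := range_proj hv (by rw [v1, hq.idem])
  have hqvv : q * (v * star v) = v * star v := by rw [← mul_assoc, v2]
  have hd : IsProjIn M (q - v * star v) := sub_proj hq hvv hqvv
  have hd0 : q - v * star v ≠ 0 := fun h => v3 (sub_eq_zero.1 h).symm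
  have hqd : q * (q - v * star v) = q - v * star v := by rw [mul_sub, hq.idem, hqvv]
  have hdv : (q - v * star v) * v = 0 := by rw [sub_mul, v2, mul_assoc, v1, hvq, sub_self]
  obtain ⟨y, hyM, hyy, hqy, hyo, -, -⟩ := wold hd hv v1 v2 hqd hdv
  generalize q - v * star v = d at *
  obtain ⟨z, hz, hz2⟩ := central_supp hd
  refine ⟨d, z, hd0, hqd, hz, ?_⟩
  have he := central_mul hz.1 hp
  have hzz := hz.1.1.idem
  have hes : Sep M (z * p) := Sep.of_psub hp (PSub.of_le he (by
    rw [← mul_assoc, ← hz.1.2 p hp.1, mul_assoc, hp.idem])) hs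
  have hze : z * (z * p) = z * p := by rw [← mul_assoc, hzz]
  generalize z * p = e at *
  obtain ⟨S, P, h1, h2, hP, hPs, heP, hmax⟩ := exhaust (M := M) e (fun s => PSub M s d)
  have hc : Countable S := countable_of_sep hes (fun q : S => q.1) (fun q => (h1 q.1 q.2).1)
    (fun q => (h1 q.1 q.2).2.1) (fun q => le_symm he (h1 q.1 q.2).1 (h1 q.1 q.2).2.2.1)
    (fun a b hab => h2 a.2 b.2 (fun h => hab (Subtype.ext h)))
  have hPe : e = P := by
    by_contra hne
    have h0 : e - P ≠ 0 := fun h => hne (sub_eq_zero.1 h)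
    have hr := sub_proj he hP heP
    have hx : ∃ x ∈ M, d * (x * (e - P)) ≠ 0 := by
      by_contra hc
      push Not at hc
      have h3 : (e - P) * z = 0 := hz2 _ fun x hx => by
        have := congrArg star (hc (star x) (star_mem hx))
        rwa [star_mul, star_mul, star_star, hr.sa, hd.sa, star_zero, mul_assoc] at this
      rw [← hz.1.2 _ hr.1, mul_sub, hze, ← heP, ← mul_assoc, hze, heP] at h3
      exact h0 h3
    obtain ⟨x, hx, hxne⟩ := hx
    obtain ⟨t, ht, ht0, t1, t2, t3, t4⟩ := exists_pi hr hd hx hxne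
    have t5 : star t * t * (e - P) = star t * t := by rw [mul_assoc, t3]
    have t6 : (e - P) * (star t * t) = star t * t := by
      have := congrArg star t5
      rwa [star_mul, hr.sa, t2.sa] at this
    refine hmax (star t * t) t2 ?_ ?_ ⟨t, ht, rfl, t4⟩ ?_
    · intro h
      rw [h, mul_zero] at t1
      exact ht0 t1.symm
    · rw [← t6, ← mul_assoc, mul_sub, he.idem, heP]
    · rw [← t6, ← mul_assoc, mul_sub, le_symm he hP heP, hP.idem]; simp
  have hch : ∀ s : S, ∃ t ∈ M, star t * t = s.1 ∧ d * t = t := fun s => (h1 s.1 s.2).2.2.2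
  choose t ht t1 t2 using hch
  obtain ⟨φ, hφ⟩ := Countable.exists_injective_nat S
  rw [hPe]
  refine psub_sum (fun s : S => y (φ s) * t s) (fun s : S => s.1) (fun s => mul_mem (hyM _) (ht s))
    (fun s => (h1 s.1 s.2).1) (fun a b hab => h2 a.2 b.2 (fun h => hab (Subtype.ext h))) ?_ ?_ ?_ hPs
  · intro s
    rw [star_mul, mul_assoc, ← mul_assoc (star (y (φ s))), hyy, t2, t1]
  · intro a b hab
    have := hyo (hφ.ne hab)
    simp only at this
    rw [star_mul, mul_assoc, ← mul_assoc (star (y (φ a))), this]; simp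
  · intro s
    rw [← mul_assoc, hqy]

def Clos (M : VonNeumannAlgebra H) (p q : H →L[ℂ] H) : Prop :=
  ∀ (F : Finset H) (ε : ℝ), 0 < ε → ∃ r, IsProjIn M r ∧ PSub M r q ∧ ∀ ξ ∈ F, ‖r ξ - p ξ‖ ≤ ε

theorem Clos.central {M : VonNeumannAlgebra H} {p q z : H →L[ℂ] H} (hq : IsProjIn M q)
    (hz : IsCentralProj M z) (h : Clos M p q) : Clos M (z * p) (z * q) := by
  intro F ε hε
  obtain ⟨r, hr, hrq, hrF⟩ := h F ε hε
  refine ⟨z * r, central_mul hz hr, PSub.central hz hq hrq, fun ξ hξ => ?_⟩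
  calc ‖(z * r) ξ - (z * p) ξ‖ = ‖z (r ξ - p ξ)‖ := by rw [map_sub]; rfl
    _ ≤ ‖r ξ - p ξ‖ := proj_norm_le hz.1 _
    _ ≤ ε := hrF ξ hξ

end PQ

namespace PQ

/-- products `r m * r (m+1) * ... * r (m+N-1)` -/
def Tp (r : ℕ → H →L[ℂ] H) (m : ℕ) : ℕ → H →L[ℂ] H
  | 0 => 1
  | N + 1 => Tp r m N * r (m + N)

theorem Tp_add (r : ℕ → H →L[ℂ] H) (m N K : ℕ) : Tp r m (N + K) = Tp r m N * Tp r (m + N) K := by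
  induction K with
  | zero => simp [Tp]
  | succ K ih =>
    rw [← add_assoc, Tp, ih, Tp, mul_assoc, add_assoc]

theorem Tp_succ (r : ℕ → H →L[ℂ] H) (m N : ℕ) : Tp r m (N + 1) = r m * Tp r (m + 1) N := by
  rw [add_comm N 1, Tp_add]
  simp [Tp]

theorem Tp_norm {M : VonNeumannAlgebra H} {r : ℕ → H →L[ℂ] H} (hr : ∀ n, IsProjIn M (r n)) (m N : ℕ)
    (ξ : H) : ‖Tp r m N ξ‖ ≤ ‖ξ‖ := by
  induction N generalizing ξ with
  | zero => simp [Tp]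
  | succ N ih =>
    rw [Tp, mul_apply_eq_comp]
    exact (ih _).trans (proj_norm_le (hr _) _)

theorem Tp_mem {M : VonNeumannAlgebra H} {r : ℕ → H →L[ℂ] H} (hr : ∀ n, IsProjIn M (r n)) (m N : ℕ) :
    Tp r m N ∈ M := by
  induction N with
  | zero => exact one_mem M
  | succ N ih => exact mul_mem ih (hr _).1

theorem Tp_bound {M : VonNeumannAlgebra H} {r : ℕ → H →L[ℂ] H} (hr : ∀ n, IsProjIn M (r n)) (c : H) (m : ℕ)
    (h : ∀ n, m ≤ n → ‖r n c - c‖ ≤ (1 / 2 : ℝ) ^ n) (N : ℕ) :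
    ‖Tp r m N c - c‖ ≤ 2 * (1 / 2 : ℝ) ^ m - 2 * (1 / 2 : ℝ) ^ (m + N) := by
  induction N with
  | zero => simp [Tp]
  | succ N ih =>
    have e : Tp r m (N + 1) c - c = Tp r m N (r (m + N) c - c) + (Tp r m N c - c) := by
      rw [Tp, mul_apply_eq_comp, map_sub]; abel
    rw [e]
    have h1 := (Tp_norm hr m N (r (m + N) c - c)).trans (h (m + N) (Nat.le_add_right _ _))
    have h2 := norm_add_le (Tp r m N (r (m + N) c - c)) (Tp r m N c - c)
    have h3 : (1 / 2 : ℝ) ^ (m + (N + 1)) = (1 / 2) ^ (m + N) * (1 / 2) := by rw [← add_assoc, pow_succ]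
    rw [h3]
    linarith

/-- vectors on which the tails of the products converge to the identity -/
def Gs (r : ℕ → H →L[ℂ] H) : Submodule ℂ H where
  carrier := {ξ | ∀ ε : ℝ, 0 < ε → ∃ m0, ∀ m, m0 ≤ m → ∀ N, ‖Tp r m N ξ - ξ‖ ≤ ε}
  zero_mem' := by
    intro ε hε
    exact ⟨0, fun m _ N => by simpa using hε.le⟩
  add_mem' := by
    intro a b ha hb ε hε
    obtain ⟨m1, h1⟩ := ha (ε / 2) (half_pos hε)
    obtain ⟨m2, h2⟩ := hb (ε / 2) (half_pos hε)
    refine ⟨max m1 m2, fun m hm N => ?_⟩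
    have e : Tp r m N (a + b) - (a + b) = (Tp r m N a - a) + (Tp r m N b - b) := by
      rw [map_add]; abel
    rw [e]
    have := norm_add_le (Tp r m N a - a) (Tp r m N b - b)
    have h3 := h1 m (le_trans (le_max_left _ _) hm) N
    have h4 := h2 m (le_trans (le_max_right _ _) hm) N
    linarith
  smul_mem' := by
    intro k a ha ε hε
    have hk : 0 < ‖k‖ + 1 := by positivity
    obtain ⟨m1, h1⟩ := ha (ε / (‖k‖ + 1)) (div_pos hε hk)
    refine ⟨m1, fun m hm N => ?_⟩
    have e : Tp r m N (k • a) - k • a = k • (Tp r m N a - a) := by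
      rw [map_smul, smul_sub]
    rw [e, norm_smul]
    have h2 := h1 m hm N
    rw [le_div_iff₀ hk] at h2
    nlinarith [norm_nonneg (Tp r m N a - a), norm_nonneg k]

theorem Gs_closed {M : VonNeumannAlgebra H} {r : ℕ → H →L[ℂ] H} (hr : ∀ n, IsProjIn M (r n)) :
    IsClosed (Gs r : Set H) := by
  rw [← closure_subset_iff_isClosed]
  intro η hη ε hε
  obtain ⟨ξ, hξ, hd⟩ := Metric.mem_closure_iff.1 hη (ε / 3) (by positivity)
  obtain ⟨m0, h0⟩ := hξ (ε / 3) (by positivity)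
  refine ⟨m0, fun m hm N => ?_⟩
  have e : Tp r m N η - η = Tp r m N (η - ξ) + (Tp r m N ξ - ξ) + (ξ - η) := by
    rw [map_sub]; abel
  rw [e]
  have h1 := Tp_norm hr m N (η - ξ)
  have h2 := h0 m hm N
  rw [dist_eq_norm] at hd
  have h3 := norm_sub_rev ξ η
  have h4 := norm_add₃_le (a := Tp r m N (η - ξ)) (b := (Tp r m N ξ - ξ)) (c := (ξ - η))
  linarith

theorem Gs_inv {M : VonNeumannAlgebra H} {r : ℕ → H →L[ℂ] H} (hr : ∀ n, IsProjIn M (r n)) :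
    ∀ w ∈ M.commutant, ∀ ξ ∈ Gs r, w ξ ∈ Gs r := by
  intro w hw ξ hξ ε hε
  have hk : 0 < ‖w‖ + 1 := by positivity
  obtain ⟨m1, h1⟩ := hξ (ε / (‖w‖ + 1)) (div_pos hε hk)
  refine ⟨m1, fun m hm N => ?_⟩
  have e : Tp r m N (w ξ) - w ξ = w (Tp r m N ξ - ξ) := by
    have := app (comm_of_mem (Tp_mem hr m N) hw) ξ
    simp only [mul_apply_eq_comp] at this
    rw [map_sub, this]
  rw [e]
  have h2 := h1 m hm N
  rw [le_div_iff₀ hk] at h2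
  have h3 := w.le_opNorm (Tp r m N ξ - ξ)
  nlinarith [norm_nonneg (Tp r m N ξ - ξ), norm_nonneg w]

theorem fin_case {M : VonNeumannAlgebra H} {p q : H →L[ℂ] H} (hp : IsProjIn M p) (hq : IsProjIn M q)
    (hs : Sep M p) (hc : Clos M p q) (hfin : Fin' M q) : PSub M p q := by
  obtain ⟨C, hC, hC'⟩ := hs
  obtain ⟨ξ, hξ⟩ := (hC.insert 0).exists_eq_range (Set.insert_nonempty _ _)
  have hξ' : ∀ x ∈ M, (∀ k, x (p (ξ k)) = 0) → x * p = 0 := by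
    intro x hx h
    have h1 := hC' (x * p) (mul_mem hx hp.1) fun η hη => by
      have : η ∈ Set.range ξ := hξ ▸ Set.mem_insert_of_mem _ hη
      obtain ⟨k, rfl⟩ := this
      exact h k
    rwa [mul_assoc, hp.idem] at h1
  classical
  have hch : ∀ n : ℕ, ∃ r, IsProjIn M r ∧ PSub M r q ∧
      ∀ k, k ≤ n → ‖r (p (ξ k)) - p (ξ k)‖ ≤ (1 / 2 : ℝ) ^ n := by
    intro n
    obtain ⟨r, h1, h2, h3⟩ := hc ((Finset.range (n + 1)).image fun k => p (ξ k)) ((1 / 2) ^ n) (by positivity)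
    refine ⟨r, h1, h2, fun k hk => ?_⟩
    have := h3 (p (ξ k)) (Finset.mem_image_of_mem _ (Finset.mem_range.2 (by omega)))
    have e := app hp.idem (ξ k)
    rw [mul_apply_eq_comp] at e
    rwa [e] at this
  choose r hr hrq hrk using hch
  have hGc := Gs_closed hr
  have hcG : ∀ k, p (ξ k) ∈ Gs r := by
    intro k ε hε
    obtain ⟨n, hn⟩ := exists_pow_lt_of_lt_one (half_pos hε) (by norm_num : (1 / 2 : ℝ) < 1)
    refine ⟨max k n, fun m hm N => ?_⟩
    have hkm := le_trans (le_max_left _ _) hm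
    have hnm := le_trans (le_max_right _ _) hm
    have h1 := Tp_bound hr (p (ξ k)) m (fun j hj => hrk j k (hkm.trans hj)) N
    have h2 : (1 / 2 : ℝ) ^ m ≤ (1 / 2) ^ n := pow_le_pow_of_le_one (by norm_num) (by norm_num) hnm
    have h3 : (0 : ℝ) < (1 / 2) ^ (m + N) := by positivity
    linarith
  have hpG : ∀ η, p η ∈ Gs r := by
    have : CompleteSpace (Gs r) := hGc.completeSpace_coe
    have hE := proj_of_sub M (Gs r) (Gs_inv hr)
    have h1 := hξ' (1 - (Gs r).starProjection) (sub_mem (one_mem M) hE.1) fun k => by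
      have := Submodule.starProjection_eq_self_iff.2 (hcG k)
      simp [this]
    intro η
    have h2 := app h1 η
    rw [sub_mul, one_mul] at h2
    simp only [sub_apply, mul_apply_eq_comp, zero_apply, sub_eq_zero] at h2
    rw [h2]
    exact Submodule.starProjection_apply_mem _ _
  have hlim : ∀ m η, ∃ l, Tendsto (fun N => (Tp r m N * p) η) atTop (𝓝 l) := by
    intro m η
    apply cauchySeq_tendsto_of_complete
    rw [Metric.cauchySeq_iff']
    intro ε hε
    obtain ⟨m0, h0⟩ := hpG η (ε / 2) (half_pos hε)
    refine ⟨m0, fun n hn => ?_⟩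
    obtain ⟨K, rfl⟩ := Nat.exists_eq_add_of_le hn
    rw [dist_eq_norm]
    have e : (Tp r m (m0 + K) * p) η - (Tp r m m0 * p) η = Tp r m m0 (Tp r (m + m0) K (p η) - p η) := by
      rw [Tp_add, map_sub]; rfl
    rw [e]
    have := (Tp_norm hr m m0 _).trans (h0 (m + m0) (Nat.le_add_left _ _) K)
    linarith
  choose f hf using hlim
  let y : ℕ → H →L[ℂ] H := fun m => continuousLinearMapOfTendsto (fun N => Tp r m N * p) (f := f m)
    (tendsto_pi_nhds.2 (hf m))
  have hy : ∀ m η, Tendsto (fun N => (Tp r m N * p) η) atTop (𝓝 (y m η)) := hf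
  have hyM : ∀ m, y m ∈ M := by
    intro m
    apply mem_of_comm
    intro w hw
    ext η
    have h1 := (w.continuous.tendsto _).comp (hy m η)
    refine tendsto_nhds_unique h1 (Tendsto.congr (fun N => ?_) (hy m (w η)))
    exact (app (comm_of_mem (mul_mem (Tp_mem hr m N) hp.1) hw) η).symm
  have hyr : ∀ m, y m = r m * y (m + 1) := by
    intro m
    ext η
    have h1 := ((r m).continuous.tendsto _).comp (hy (m + 1) η)
    refine tendsto_nhds_unique ((tendsto_add_atTop_iff_nat 1).2 (hy m η)) (Tendsto.congr (fun N => ?_) h1)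
    rw [Tp_succ]; rfl
  have hyp : ∀ m, y m * p = y m := by
    intro m
    ext η
    refine tendsto_nhds_unique (hy m (p η)) (Tendsto.congr (fun N => ?_) (hy m η))
    have := app hp.idem η
    rw [mul_apply_eq_comp] at this
    rw [mul_apply_eq_comp, mul_apply_eq_comp, this]
  have hylim : ∀ η, (∀ m, y m η = 0) → p η = 0 := by
    intro η h
    by_contra hne
    have hpos : 0 < ‖p η‖ := norm_pos_iff.2 hne
    obtain ⟨m0, h0⟩ := hpG η (‖p η‖ / 2) (half_pos hpos)
    have h1 := ((hy m0 η).sub_const (p η)).norm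
    have h2 := le_of_tendsto h1 (Eventually.of_forall fun N => h0 m0 le_rfl N)
    rw [h, zero_sub, norm_neg] at h2
    linarith
  have hpol := fun m => polar (hyM m)
  choose v hv v1 v2 v3 v4 v5 using hpol
  have hgp : ∀ m, star (v m) * v m * p = star (v m) * v m := by
    intro m
    have := v3 m (1 - p) (by rw [mul_sub, mul_one, hyp, sub_self])
    rw [mul_sub, mul_one, sub_eq_zero] at this
    exact this.symm
  refine increasing (fun m => star (v m) * v m) hq hp v1 ?_ ?_ ?_ hfin ?_
  · intro m
    have h0 : y (m + 1) * (1 - star (v (m + 1)) * v (m + 1)) = 0 := by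
      rw [mul_sub, mul_one, v2, sub_self]
    have := v3 m (1 - star (v (m + 1)) * v (m + 1)) (by rw [hyr, mul_assoc, h0, mul_zero])
    rw [mul_sub, mul_one, sub_eq_zero] at this
    have h2 := congrArg star this.symm
    rwa [star_mul (star (v m) * v m), (v1 m).sa, (v1 (m + 1)).sa] at h2
  · intro m
    have h2 := congrArg star (hgp m)
    rwa [star_mul (star (v m) * v m), (v1 m).sa, hp.sa] at h2
  · intro x hx
    have h1 : p * star x = 0 := by
      ext η
      refine hylim (star x η) fun m => ?_
      have h2 := congrArg star (hx m)
      rw [star_mul x, (v1 m).sa, star_zero] at h2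
      have h3 : y m * star x = 0 := by rw [← v2, mul_assoc, h2, mul_zero]
      exact app h3 η
    have h2 := congrArg star h1
    rwa [star_mul, star_star, hp.sa, star_zero] at h2
  · intro m
    refine PSub.trans ⟨v m, hv m, rfl, ?_⟩ (hrq m)
    have h1 := v5 m (1 - r m) (by rw [hyr, ← mul_assoc, sub_mul, one_mul, (hr m).idem]; simp)
    have h2 : v m * (star (v m) * v m) = v m := pi_mul rfl (v1 m).idem
    have h3 : (1 - r m) * v m = 0 := by rw [← h2, ← mul_assoc (v m), ← mul_assoc, h1, zero_mul]
    rw [sub_mul, one_mul, sub_eq_zero] at h3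
    exact h3.symm

theorem main_lemma {M : VonNeumannAlgebra H} {p q : H →L[ℂ] H} (hp : IsProjIn M p) (hq : IsProjIn M q)
    (hs : Sep M p) (hc : Clos M p q) : PSub M p q := by
  obtain ⟨S, w, h1, h2, hw, hws, -, hmax⟩ := exhaust (M := M) 1
    (fun z => IsCentralProj M z ∧ PSub M (z * p) (z * q))
  have hwc : IsCentralProj M w := central_sum (fun z : S => (h1 z.1 z.2).2.2.2.1) hw hws
  have hwp : PSub M (w * p) (w * q) := psub_central_sum (fun z : S => z.1) hp hq
    (fun z : S => (h1 z.1 z.2).2.2.2.1) (fun a b hab => h2 a.2 b.2 (fun h => hab (Subtype.ext h))) hws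
    (fun z : S => (h1 z.1 z.2).2.2.2.2)
  have hw' := central_one_sub hwc
  have hp' := central_mul hw' hp
  have hq' := central_mul hw' hq
  have hs' : Sep M ((1 - w) * p) := Sep.of_psub hp (PSub.of_le hp' (by
    rw [← mul_assoc, ← hw'.2 p hp.1, mul_assoc, hp.idem])) hs
  refine psub_two hp hq hwc hwp ?_
  by_cases hfin : Fin' M ((1 - w) * q)
  · exact fin_case hp' hq' hs' (hc.central hq hw') hfin
  · exfalso
    obtain ⟨d, z, hd0, hqd, hz, hzp⟩ := inf_case hp' hq' hs' hfin
    have h3 : (1 - w) * d = d := by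
      rw [← hqd, ← mul_assoc, ← mul_assoc, hw'.1.idem]
    have h4 := hz.2.2 (1 - w) hw' h3
    rw [← mul_assoc, h4] at hzp
    have h5 := PSub.central hz.1 hq' hzp
    rw [← mul_assoc, ← mul_assoc, h4, hz.1.1.idem] at h5
    refine hmax z hz.1.1 (cs_ne hz hd0) (one_mul _) ⟨hz.1, h5⟩ ?_
    rw [mul_sub, mul_one, sub_eq_self] at h4
    rw [hwc.2 z hz.1.1.1, h4]

end PQ

namespace PQ

theorem psub_refl {M : VonNeumannAlgebra H} {p : H →L[ℂ] H} (hp : IsProjIn M p) : PSub M p p :=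
  PSub.of_le hp hp.idem

theorem cont_applyAt (M : VonNeumannAlgebra H) (ξ : H) : Continuous fun r : ProjSet M => r.1 ξ :=
  (continuous_apply ξ).comp continuous_induced_dom

theorem sep_central {M : VonNeumannAlgebra H} {z p : H →L[ℂ] H} (hz : IsCentralProj M z) (hs : Sep M z)
    (hp : IsProjIn M p) : Sep M (z * p) :=
  Sep.of_psub hz.1 (PSub.of_le (central_mul hz hp) (by rw [← mul_assoc, hz.1.idem])) hs

theorem sep_central' {M : VonNeumannAlgebra H} {z p : H →L[ℂ] H} (hz : IsCentralProj M z) (hs : Sep M p)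
    (hp : IsProjIn M p) : Sep M (z * p) :=
  Sep.of_psub hp (PSub.of_le (central_mul hz hp) (by
    rw [← mul_assoc, ← hz.2 p hp.1, mul_assoc, hp.idem])) hs

theorem insep_psub {M : VonNeumannAlgebra H} {z : H →L[ℂ] H} (hz : IsCentralProj M z) (hs : Sep M z)
    (p q : ProjSet M) (h : Inseparable (pquotMk M p) (pquotMk M q)) : PSub M (z * p.1) (z * q.1) := by
  let A : Set (PQuot M) := {x | Quot.lift (fun r : ProjSet M => PSub M (z * r.1) (z * q.1)) (by
    intro a b hab
    have h1 := mvn_central hz hab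
    apply propext
    constructor
    · exact fun h => (PSub.of_mvn (central_mul hz b.2) (mvn_symm h1)).trans h
    · exact fun h => (PSub.of_mvn (central_mul hz a.2) h1).trans h) x}
  have hA : IsClosed A := by
    rw [← isQuotientMap_quot_mk.isClosed_preimage]
    rw [← closure_subset_iff_isClosed]
    intro r0 hr0
    change PSub M (z * r0.1) (z * q.1)
    refine main_lemma (central_mul hz r0.2) (central_mul hz q.2) (sep_central hz hs r0.2) ?_
    intro F ε hε
    have hopen : IsOpen (⋂ ξ ∈ F, {r : ProjSet M | ‖r.1 ξ - r0.1 ξ‖ < ε}) := by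
      refine isOpen_biInter_finset fun ξ _ => ?_
      exact isOpen_lt (((cont_applyAt M ξ).sub continuous_const).norm) continuous_const
    obtain ⟨r, hr1, hr2⟩ := mem_closure_iff.1 hr0 _ hopen (by simp [hε])
    refine ⟨z * r.1, central_mul hz r.2, hr2, fun ξ hξ => ?_⟩
    have h1 : ‖r.1 ξ - r0.1 ξ‖ < ε := by
      simp only [Set.mem_iInter] at hr1
      exact hr1 ξ hξ
    calc ‖(z * r.1) ξ - (z * r0.1) ξ‖ = ‖z (r.1 ξ - r0.1 ξ)‖ := by rw [map_sub]; rfl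
      _ ≤ ‖r.1 ξ - r0.1 ξ‖ := proj_norm_le hz.1 _
      _ ≤ ε := h1.le
  exact (h.mem_closed_iff hA).2 (psub_refl (central_mul hz q.2))

theorem t0_of_sum (M : VonNeumannAlgebra H) (h : ∃ (I : Type u) (z : I → H →L[ℂ] H),
        (∀ i, IsCentralProj M (z i) ∧ SigmaFiniteProj M (z i)) ∧
        (Pairwise fun i j => z i * z j = 0) ∧
        ∀ ξ : H, HasSum (fun i => z i ξ) ξ) : T0Space (PQuot M) := by
  obtain ⟨I, z, hz, ho, hsum⟩ := h
  have key : ∀ p q : ProjSet M, Inseparable (pquotMk M p) (pquotMk M q) → PSub M p.1 q.1 := by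
    intro p q hpq
    have := psub_central_sum (w := 1) z p.2 q.2 (fun i => (hz i).1) ho hsum fun i =>
      insep_psub (hz i).1 (sep_of_sigma (hz i).1.1 (hz i).2) p q hpq
    simpa using this
  refine ⟨fun x y hxy => ?_⟩
  induction x using Quot.ind with | mk p =>
  induction y using Quot.ind with | mk q =>
  exact Quot.sound (schroeder p.2 q.2 (key p q hxy) (key q p hxy.symm))

theorem mvn_of_eq {M : VonNeumannAlgebra H} {p q : ProjSet M} (h : pquotMk M p = pquotMk M q) :
    MvNEquiv M p.1 q.1 := by
  have he : Equivalence (fun p q : ProjSet M => MvNEquiv M p.1 q.1) :=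
    ⟨fun p => mvn_iff.2 ⟨p.1, p.2.1, by rw [p.2.sa, p.2.idem], by rw [p.2.sa, p.2.idem]⟩,
      fun h => mvn_symm h, fun {a b c} h h' => mvn_trans a.2 c.2 h h'⟩
  exact he.eqvGen_iff.1 (Quot.eqvGen_exact h)

theorem mvn_zero {M : VonNeumannAlgebra H} {p q : H →L[ℂ] H} (hp : IsProjIn M p) (h : MvNEquiv M p q)
    (h0 : p = 0) : q = 0 := by
  obtain ⟨v, hv, v1, v2⟩ := mvn_iff.1 h
  have := pi_mul v1 hp.idem
  rw [h0, mul_zero] at this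
  rw [← v2, ← this, zero_mul]

set_option maxHeartbeats 1000000 in
theorem no_homog (M : VonNeumannAlgebra H) (hT : T0Space (PQuot M)) :
    ¬ ∃ (ι : Type u) (p : H →L[ℂ] H), ¬ Countable ι ∧ IsHomogeneousProj M ι p := by
  rintro ⟨ι, p, hι, hp, hp0, e, he, heo, hee, hes, hst⟩
  have hinf : Infinite ι := by
    by_contra hc
    exact hι (@Finite.to_countable _ (not_infinite_iff_finite.1 hc))
  have hsub : ∀ B : Set ι, ∃ P, IsProjIn M P ∧ (∀ ξ, HasSum (fun i : B => e i.1 ξ) (P ξ)) ∧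
      (∀ i : B, P * e i.1 = e i.1) := by
    intro B
    obtain ⟨P, h1, h2, h3, -⟩ := proj_sum (M := M) (fun i : B => e i.1) (fun i => he i.1)
      (fun a b hab => heo (fun h => hab (Subtype.ext h)))
    exact ⟨P, h1, h2, h3⟩
  choose P hP hPs hPe using hsub
  have hPe1 : ∀ B, ∀ i ∈ B, P B * e i = e i := fun B i hi => hPe B ⟨i, hi⟩
  have hPe0 : ∀ B, ∀ i ∉ B, P B * e i = 0 := fun B i hi =>
    sum_zero (sum_mul_right (hPs B) (e i)) fun j => heo (fun h => hi (h ▸ j.2))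
  have hPp : ∀ B, P B * p = P B := by
    intro B
    have h1 : p * P B = P B := by
      refine sum_unique (sum_mul_left (hPs B) p) ?_
      have : ∀ i : B, p * e i.1 = e i.1 := fun i => by
        rw [sum_single (sum_mul_right hes (e i.1)) i.1 fun j hj => heo hj, (he i.1).idem]
      simpa only [this] using hPs B
    exact le_symm hp (hP B) h1
  have hinj : ∀ (B B' : Set ι) (f : B → B'), Function.Injective f → PSub M (P B) (P B') := by
    intro B B' f hf
    have hch : ∀ i : B, ∃ v ∈ M, star v * v = e i.1 ∧ v * star v = e (f i).1 := fun i =>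
      mvn_iff.1 (hee i.1 (f i).1)
    choose v hv v1 v2 using hch
    have hev : ∀ i, e (f i).1 * v i = v i := fun i => by
      rw [← v2, mul_assoc, v1, pi_mul (v1 i) (he i.1).idem]
    refine psub_sum v (fun i : B => e i.1) hv (fun i => he i.1)
      (fun a b hab => heo (fun h => hab (Subtype.ext h))) v1 ?_ ?_ (hPs B)
    · intro i j hij
      have h0 : e (f i).1 * e (f j).1 = 0 := heo (fun h => hij (hf (Subtype.ext h)))
      rw [← hev i, ← hev j, star_mul, (he _).sa, mul_assoc, ← mul_assoc (e (f i).1), h0]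
      simp
    · intro i
      rw [← hev i, ← mul_assoc, hPe1 B' _ (f i).2]
  let T : (ι → Bool) → Set ι := fun b => {i | b i = true}
  let Φ : (ι → Bool) → ProjSet M := fun b => ⟨P (T b), hP (T b)⟩
  have hΦ : Continuous Φ := by
    refine continuous_induced_rng.2 (continuous_pi fun ξ => ?_)
    rw [continuous_iff_continuousAt]
    intro b
    refine Metric.tendsto_nhds.2 fun ε hε => ?_
    have htend : Tendsto (fun s : Finset ι => ∑ i ∈ s, e i ξ) atTop (𝓝 (p ξ)) := by
      have := hes ξ
      rwa [HasSum, SummationFilter.unconditional_filter] at this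
    obtain ⟨F, hF⟩ := (Metric.tendsto_nhds.1 htend (ε / 3) (by positivity)).exists
    have hnb : {b' : ι → Bool | ∀ i ∈ F, b' i = b i} ∈ 𝓝 b := by
      have : {b' : ι → Bool | ∀ i ∈ F, b' i = b i} = ⋂ i ∈ F, {b' : ι → Bool | b' i = b i} := by
        ext b'; simp
      rw [this]
      refine IsOpen.mem_nhds (isOpen_biInter_finset fun i _ => ?_) (by simp)
      have hc : Continuous fun b' : ι → Bool => b' i := continuous_apply i
      exact (isOpen_discrete ({b i} : Set Bool)).preimage hc
    filter_upwards [hnb] with b' hb'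
    change dist (P (T b') ξ) (P (T b) ξ) < ε
    have h1 : ∀ B, P B ξ = P B (p ξ - ∑ i ∈ F, e i ξ) + ∑ i ∈ F, P B (e i ξ) := by
      intro B
      rw [map_sub, map_sum, sub_add_cancel]
      exact (app (hPp B) ξ).symm
    have h2 : ∑ i ∈ F, P (T b') (e i ξ) = ∑ i ∈ F, P (T b) (e i ξ) := by
      refine Finset.sum_congr rfl fun i hi => ?_
      by_cases hbi : b i = true
      · have a1 := app (hPe1 (T b) i hbi) ξ
        have a2 := app (hPe1 (T b') i ((hb' i hi).trans hbi)) ξ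
        exact a2.trans a1.symm
      · have a1 := app (hPe0 (T b) i hbi) ξ
        have a2 := app (hPe0 (T b') i (fun h => hbi ((hb' i hi).symm.trans h))) ξ
        exact a2.trans a1.symm
    rw [h1 (T b'), h1 (T b), h2, dist_add_right, dist_eq_norm]
    rw [dist_comm, dist_eq_norm] at hF
    have h3 := proj_norm_le (hP (T b')) (p ξ - ∑ i ∈ F, e i ξ)
    have h4 := proj_norm_le (hP (T b)) (p ξ - ∑ i ∈ F, e i ξ)
    have h5 := norm_sub_le (P (T b') (p ξ - ∑ i ∈ F, e i ξ)) (P (T b) (p ξ - ∑ i ∈ F, e i ξ))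
    linarith
  have hΨ : Continuous fun b => pquotMk M (Φ b) := continuous_quot_mk.comp hΦ
  have heq : ∀ (b b' : ι → Bool), (∃ f : T b → T b', Function.Injective f) →
      (∃ f : T b' → T b, Function.Injective f) → pquotMk M (Φ b) = pquotMk M (Φ b') := by
    rintro b b' ⟨f, hf⟩ ⟨g, hg⟩
    exact Quot.sound (schroeder (hP _) (hP _) (hinj _ _ f hf) (hinj _ _ g hg))
  classical
  obtain ⟨g⟩ : Nonempty (ℕ ↪ ι) := ⟨Infinite.natEmbedding ι⟩
  let bu : ι → Bool := fun _ => true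
  let bs : ι → Bool := fun i => decide (i ∈ Set.range g)
  have hTs : T bs = Set.range g := by ext i; simp [T, bs]
  have hins : Inseparable (pquotMk M (Φ bu)) (pquotMk M (Φ bs)) := by
    rw [inseparable_iff_forall_isOpen]
    intro U hU
    have hU' := isOpen_pi_iff.1 (hU.preimage hΨ)
    constructor
    · intro h
      obtain ⟨F, s, h1, h2⟩ := hU' bu h
      have h3 := h2 (show (fun i => decide (i ∈ Set.range g ∨ i ∈ F)) ∈ _ from fun i hi => by
        have : decide (i ∈ Set.range g ∨ i ∈ F) = true := by simpa using Or.inr hi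
        simp only [this]
        exact (h1 i hi).2)
      have : pquotMk M (Φ bs) = pquotMk M (Φ (fun i => decide (i ∈ Set.range g ∨ i ∈ F))) := by
        apply heq
        · refine ⟨fun i => ⟨i.1, ?_⟩, fun a b hab => Subtype.ext (congrArg (fun t => t.1) hab)⟩
          have hi : i.1 ∈ Set.range g := hTs.le i.2
          exact decide_eq_true (Or.inl hi)
        · have hc : Countable (T (fun i => decide (i ∈ Set.range g ∨ i ∈ F))) := by
            have : T (fun i => decide (i ∈ Set.range g ∨ i ∈ F)) = Set.range g ∪ (F : Set ι) := by
              ext i; simp [T]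
            rw [this]
            exact Set.countable_coe_iff.2 ((Set.countable_range g).union F.countable_toSet)
          obtain ⟨φ, hφ⟩ := Countable.exists_injective_nat (T (fun i => decide (i ∈ Set.range g ∨ i ∈ F)))
          refine ⟨fun i => ⟨g (φ i), by rw [hTs]; exact ⟨_, rfl⟩⟩, fun a b hab => ?_⟩
          exact hφ (g.injective (congrArg (fun t => t.1) hab))
      rw [this]
      exact h3
    · intro h
      obtain ⟨F, s, h1, h2⟩ := hU' bs h
      have h3 := h2 (show (fun i => decide (i ∈ Set.range g ∨ i ∉ F)) ∈ _ from fun i hi => by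
        have : decide (i ∈ Set.range g ∨ i ∉ F) = bs i := by
          have hi' : i ∈ F := hi
          simp only [bs, hi', not_true_eq_false, or_false]
        simp only [this]
        exact (h1 i hi).2)
      have : pquotMk M (Φ bu) = pquotMk M (Φ (fun i => decide (i ∈ Set.range g ∨ i ∉ F))) := by
        apply heq
        · obtain ⟨ψ⟩ := Cardinal.eq.1 (Cardinal.mk_compl_finset_of_infinite F)
          refine ⟨fun i => ⟨(ψ.symm i.1).1, ?_⟩, fun a b hab => ?_⟩
          · simp only [T, Set.mem_setOf_eq, decide_eq_true_eq]
            exact Or.inr (ψ.symm i.1).2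
          · exact Subtype.ext (ψ.symm.injective (Subtype.ext (congrArg (fun t => t.1) hab)))
        · exact ⟨fun i => ⟨i.1, rfl⟩, fun a b hab => Subtype.ext (congrArg (fun t => t.1) hab)⟩
      rw [this]
      exact h3
  have hmv : MvNEquiv M (P (T bu)) (P (T bs)) := mvn_of_eq hins.eq
  obtain ⟨i0⟩ : Nonempty ι := inferInstance
  have he0 : e i0 ≠ 0 := fun h => hp0 (sum_zero hes fun i => mvn_zero (he i0) (hee i0 i) h)
  obtain ⟨J, f, c, hf, hc, hcc, hfs⟩ := hst i0
  obtain ⟨j, hj⟩ : ∃ j, f j ≠ 0 := by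
    by_contra hne
    push Not at hne
    exact he0 (sum_zero hfs hne)
  have hce : c j * e i0 = f j := by
    rw [sum_single (sum_mul_left hfs (c j)) j fun k hk => ?_, (hc j).2.1]
    rw [← (hc k).2.1, ← mul_assoc, hcc hk.symm, zero_mul]
  have hz := (hc j).1
  have hsep : ∀ i, Sep M (c j * e i) := by
    intro i
    have := mvn_central hz (hee i i0)
    rw [hce] at this
    exact Sep.of_psub (hf j).1 (PSub.of_mvn (central_mul hz (he i)) this)
      (sep_of_sigma (hf j).1 (hf j).2)
  have hne : ∀ i, c j * e i ≠ 0 := by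
    intro i h
    have := mvn_zero (central_mul hz (he i)) (mvn_central hz (hee i i0)) h
    rw [hce] at this
    exact hj this
  have hcS : Countable (T bs) := by
    rw [hTs]; exact Set.countable_coe_iff.2 (Set.countable_range g)
  have hS : Sep M (c j * P (T bs)) :=
    Sep.sum (fun i : T bs => hsep i.1) (sum_mul_left (hPs (T bs)) (c j))
  have hU : Sep M (c j * P (T bu)) := Sep.of_psub (central_mul hz (hP _))
    (PSub.of_mvn (central_mul hz (hP _)) (mvn_central hz hmv)) hS
  refine hι (countable_of_sep hU (fun i => c j * e i) (fun i => central_mul hz (he i)) hne ?_ ?_)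
  · intro i
    have h1 : e i * P (T bu) = e i := le_symm (hP _) (he i) (hPe1 (T bu) i rfl)
    rw [hz.2 _ (he i).1, mul_assoc, ← mul_assoc (c j), hz.1.idem, hz.2 _ (hP _).1, ← mul_assoc, h1]
  · intro a b hab
    change c j * e a * (c j * e b) = 0
    have h0 : e a * e b = 0 := heo hab
    rw [hz.2 _ (he a).1, mul_assoc, ← mul_assoc (c j), hz.1.idem, hz.2 _ (he b).1, ← mul_assoc, h0,
      zero_mul]

theorem Sep.add {M : VonNeumannAlgebra H} {a b : H →L[ℂ] H} (ha : Sep M a) (hb : Sep M b) : Sep M (a + b) := by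
  obtain ⟨C, hC, hC'⟩ := ha
  obtain ⟨D, hD, hD'⟩ := hb
  refine ⟨C ∪ D, hC.union hD, fun x hx h => ?_⟩
  rw [mul_add, hC' x hx fun ξ hξ => h ξ (Or.inl hξ), hD' x hx fun ξ hξ => h ξ (Or.inr hξ), add_zero]

theorem central_central {M : VonNeumannAlgebra H} {z c : H →L[ℂ] H} (hz : IsCentralProj M z)
    (hc : IsCentralProj M c) : IsCentralProj M (z * c) :=
  ⟨central_mul hz hc.1, fun x hx => by
    rw [mul_assoc, hc.2 x hx, ← mul_assoc, hz.2 x hx, mul_assoc]⟩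

theorem sum_of_no_homog (M : VonNeumannAlgebra H)
    (hno : ¬ ∃ (ι : Type u) (p : H →L[ℂ] H), ¬ Countable ι ∧ IsHomogeneousProj M ι p) :
    ∃ (I : Type u) (z : I → H →L[ℂ] H),
        (∀ i, IsCentralProj M (z i) ∧ SigmaFiniteProj M (z i)) ∧
        (Pairwise fun i j => z i * z j = 0) ∧
        ∀ ξ : H, HasSum (fun i => z i ξ) ξ := by
  obtain ⟨S, w, h1, h2, hw, hws, -, hmax⟩ := exhaust (M := M) 1
    (fun z => IsCentralProj M z ∧ SigmaFiniteProj M z)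
  have hwc : IsCentralProj M w := central_sum (fun z : S => (h1 z.1 z.2).2.2.2.1) hw hws
  by_cases hw1 : w = 1
  · refine ⟨S, fun z => z.1, fun z => (h1 z.1 z.2).2.2.2,
      fun a b hab => h2 a.2 b.2 (fun h => hab (Subtype.ext h)), fun ξ => ?_⟩
    have := hws ξ
    rwa [hw1] at this
  exfalso
  have hz0 := central_one_sub hwc
  obtain ⟨f, hf, hf0, hzf, hfs⟩ := cyclic_exists (fun h => hw1 (sub_eq_zero.1 h).symm) hz0.1
  obtain ⟨c, hc, -⟩ := central_supp hf
  have hcw : c * w = 0 := by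
    have := hc.2.2 _ hz0 hzf
    rwa [mul_sub, mul_one, sub_eq_self] at this
  obtain ⟨S', P, k1, k2, hP, hPs, hcP, kmax⟩ := exhaust (M := M) c (fun q => MvNEquiv M q f)
  have hr := sub_proj hc.1.1 hP hcP
  obtain ⟨z, hz, hz1, hz2⟩ := comparison hr hf
  have hzf0 : z * f ≠ 0 := by
    intro h
    have h3 : PSub M f (c - P) := by
      rw [sub_mul, one_mul, h, sub_zero] at hz2
      refine hz2.trans (PSub.of_le (central_mul (central_one_sub hz) hr) ?_)
      rw [← mul_assoc, ← (central_one_sub hz).2 _ hr.1, mul_assoc, hr.idem]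
    obtain ⟨v, hv, v1, v2⟩ := h3
    have hvv : IsProjIn M (v * star v) := range_proj hv (by rw [v1, hf.idem])
    have hm : MvNEquiv M f (v * star v) := mvn_iff.2 ⟨v, hv, v1, rfl⟩
    refine kmax (v * star v) hvv (fun h0 => hf0 (mvn_zero hvv (mvn_symm hm) h0)) ?_ (mvn_symm hm) ?_
    · rw [← v2, ← mul_assoc, ← mul_assoc, mul_sub, hc.1.1.idem, hcP]
    · have : P * v = 0 := by
        rw [← v2, ← mul_assoc, mul_sub, le_symm hc.1.1 hP hcP, hP.idem]; simp
      rw [← mul_assoc, this, zero_mul]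
  have hzc := central_central hz hc.1
  have hqs : ∀ q ∈ S', Sep M (z * q) := fun q hq =>
    Sep.of_psub (central_mul hz hf) (PSub.of_mvn (central_mul hz (k1 q hq).1)
      (mvn_central hz (k1 q hq).2.2.2)) (sep_central' hz hfs hf)
  have hunc : ¬ Countable S' := by
    intro hcount
    have h3 : Sep M (z * P) := Sep.sum (fun q : S' => hqs q.1 q.2) (sum_mul_left hPs z)
    have h4 : Sep M (z * (c - P)) := Sep.of_psub (central_mul hz hf) hz1 (sep_central' hz hfs hf)
    have h5 := h3.add h4
    rw [← mul_add, add_sub_cancel] at h5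
    refine hmax (z * c) hzc.1 ?_ (one_mul _) ⟨hzc, h5.sigma⟩ ?_
    · intro h
      apply hzf0
      rw [← hc.2.1, ← mul_assoc, h, zero_mul]
    · rw [hwc.2 _ hzc.1.1, mul_assoc, hcw, mul_zero]
  apply hno
  refine ⟨S', z * P, hunc, central_mul hz hP, ?_, fun q => z * q.1,
    fun q => central_mul hz (k1 q.1 q.2).1, ?_, ?_, sum_mul_left hPs z, ?_⟩
  · obtain ⟨q⟩ : Nonempty S' := by
      by_contra hemp
      rw [not_nonempty_iff] at hemp
      exact hunc inferInstance
    intro h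
    have hPq : P * q.1 = q.1 := by
      rw [sum_single (sum_mul_right hPs q.1) q fun j hj => k2 j.2 q.2 (fun h => hj (Subtype.ext h)),
        (k1 q.1 q.2).1.idem]
    refine hzf0 (mvn_zero (central_mul hz (k1 q.1 q.2).1) (mvn_central hz (k1 q.1 q.2).2.2.2) ?_)
    rw [← hPq, ← mul_assoc, h, zero_mul]
  · intro a b hab
    change z * a.1 * (z * b.1) = 0
    have h0 : a.1 * b.1 = 0 := k2 a.2 b.2 (fun h => hab (Subtype.ext h))
    rw [hz.2 _ (k1 a.1 a.2).1.1, mul_assoc, ← mul_assoc z, hz.1.idem, hz.2 _ (k1 b.1 b.2).1.1, ← mul_assoc,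
      h0, zero_mul]
  · intro a b
    exact mvn_central hz (mvn_trans (k1 a.1 a.2).1 (k1 b.1 b.2).1 (k1 a.1 a.2).2.2.2
      (mvn_symm (k1 b.1 b.2).2.2.2))
  · intro q
    have hzq := central_mul hz (k1 q.1 q.2).1
    obtain ⟨c', hc', -⟩ := central_supp hzq
    refine ⟨PUnit, fun _ => z * q.1, fun _ => c', fun _ => ⟨hzq, (hqs q.1 q.2).sigma⟩, fun _ => hc', ?_, ?_⟩
    · intro a b hab
      exact absurd rfl hab
    · intro ξ
      simpa using hasSum_fintype (fun _ : PUnit.{u + 1} => (z * q.1) ξ)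

theorem final (M : VonNeumannAlgebra H) :
    (T0Space (PQuot M) ↔
      ¬ ∃ (ι : Type u) (p : H →L[ℂ] H), ¬ Countable ι ∧ IsHomogeneousProj M ι p) ∧
    (T0Space (PQuot M) ↔
      ∃ (I : Type u) (z : I → H →L[ℂ] H),
        (∀ i, IsCentralProj M (z i) ∧ SigmaFiniteProj M (z i)) ∧
        (Pairwise fun i j => z i * z j = 0) ∧
        ∀ ξ : H, HasSum (fun i => z i ξ) ξ) :=
  ⟨⟨no_homog M, fun h => t0_of_sum M (sum_of_no_homog M h)⟩,
    ⟨fun h => sum_of_no_homog M (no_homog M h), t0_of_sum M⟩⟩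

end PQ

/-- The quotient operator topology on `P(M)/∼` is `T₀` iff `M` contains
no `κ`-homogeneous projection for an uncountable cardinal `κ`, equivalently iff `M` is a
(possibly uncountable) direct sum of σ-finite von Neumann algebras. -/
theorem pquot_t0_iff (M : VonNeumannAlgebra H) :
    (T0Space (PQuot M) ↔
      ¬ ∃ (ι : Type u) (p : H →L[ℂ] H), ¬ Countable ι ∧ IsHomogeneousProj M ι p) ∧
    (T0Space (PQuot M) ↔
      ∃ (I : Type u) (z : I → H →L[ℂ] H),
        (∀ i, IsCentralProj M (z i) ∧ SigmaFiniteProj M (z i)) ∧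
        (Pairwise fun i j => z i * z j = 0) ∧
        ∀ ξ : H, HasSum (fun i => z i ξ) ξ) := by
  exact PQ.final M
end
end

section
/- The Kadison–Pedersen relation ≈ on M₊ is an equivalence relation which is homogeneous (h ≈ k implies λh ≈ λk for λ > 0) and completely additive: if h_α ≈ k_α for all α and Σh_α, Σk_α exist in M₊, then Σh_α ≈ Σk_α. -/
open ContinuousLinearMap Filter Topology

universe u

noncomputable section

variable {H : Type u} [NormedAddCommGroup H] [InnerProductSpace ℂ H] [CompleteSpace H]

theorem kp_sqrt_mem (M : VonNeumannAlgebra H) (k : H →L[ℂ] H) (hk : k ∈ M) (hp : k.IsPositive) :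
    ∃ a ∈ M, adjoint a = a ∧ a * a = k := by
  have h0 : 0 ≤ k := (ContinuousLinearMap.nonneg_iff_isPositive k).2 hp
  refine ⟨CFC.sqrt k, ?_, ?_, CFC.sqrt_mul_sqrt_self k h0⟩
  · rw [← VonNeumannAlgebra.commutant_commutant M, VonNeumannAlgebra.mem_commutant_iff]
    intro t ht
    have hc : Commute k t := (VonNeumannAlgebra.mem_commutant_iff.1 ht) k hk
    exact (hc.cfcₙ_nnreal _).symm
  · exact (IsSelfAdjoint.of_nonneg (CFC.sqrt_nonneg k))

theorem kp_adjoint_mem (M : VonNeumannAlgebra H) {x : H →L[ℂ] H} (hx : x ∈ M) :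
    adjoint x ∈ M := star_mem (S := VonNeumannAlgebra H) hx

theorem kp_star_mul_pos (x : H →L[ℂ] H) : (adjoint x * x).IsPositive :=
  (ContinuousLinearMap.nonneg_iff_isPositive _).1 (star_mul_self_nonneg x)

theorem kp_mul_star_pos (x : H →L[ℂ] H) : (x * adjoint x).IsPositive :=
  (ContinuousLinearMap.nonneg_iff_isPositive _).1 (mul_star_self_nonneg x)

/-- Douglas factorization inside a von Neumann algebra. -/
theorem kp_douglas (M : VonNeumannAlgebra H) (a y : H →L[ℂ] H) (ha : a ∈ M) (hy : y ∈ M)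
    (hsa : adjoint a = a) (hle : ∀ ξ, ‖y ξ‖ ≤ ‖a ξ‖) : ∃ v ∈ M, y = v * a := by
  let K : Submodule ℂ H := (LinearMap.range (a : H →ₗ[ℂ] H)).topologicalClosure
  have hmem : ∀ ξ, a ξ ∈ K := fun ξ => Submodule.le_topologicalClosure _ ⟨ξ, rfl⟩
  let e : H →ₗ[ℂ] K := (a : H →ₗ[ℂ] H).codRestrict K hmem
  have hd : DenseRange e := by
    intro z
    rw [closure_subtype]
    have : (Subtype.val '' Set.range e : Set H) = LinearMap.range (a : H →ₗ[ℂ] H) := by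
      ext w
      constructor
      · rintro ⟨_, ⟨ξ, rfl⟩, rfl⟩
        exact ⟨ξ, rfl⟩
      · rintro ⟨ξ, rfl⟩
        exact ⟨_, ⟨ξ, rfl⟩, rfl⟩
    rw [this]
    exact z.2
  have hb : ∃ C, ∀ x, ‖(y : H →ₗ[ℂ] H) x‖ ≤ C * ‖e x‖ := ⟨1, fun x => by
    rw [one_mul]; exact hle x⟩
  let v0 : K →L[ℂ] H := (y : H →ₗ[ℂ] H).extendOfNorm e
  let v : H →L[ℂ] H := v0 ∘L K.orthogonalProjection
  have hva : ∀ ξ, v (a ξ) = y ξ := by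
    intro ξ
    have h1 : K.orthogonalProjection (a ξ) = e ξ :=
      Submodule.orthogonalProjection_mem_subspace_eq_self (e ξ)
    change v0 (K.orthogonalProjection (a ξ)) = y ξ
    rw [h1]
    exact LinearMap.extendOfNorm_eq hd hb ξ
  have hv0 : ∀ η ∈ Kᗮ, v η = 0 := by
    intro η hη
    change v0 (K.orthogonalProjection η) = 0
    rw [Submodule.orthogonalProjection_mem_subspace_orthogonalComplement_eq_zero hη, map_zero]
  have hin : ∀ ξ η, inner ℂ (a ξ) η = inner ℂ ξ (a η) := by
    intro ξ η
    conv_lhs => rw [← hsa]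
    rw [adjoint_inner_left]
  have hK : ∀ η, η ∈ Kᗮ ↔ a η = 0 := by
    intro η
    rw [Submodule.orthogonal_closure, Submodule.mem_orthogonal]
    constructor
    · intro h
      have := h _ ⟨a η, rfl⟩
      change inner ℂ (a (a η)) η = 0 at this
      rw [hin] at this
      exact inner_self_eq_zero.1 this
    · rintro h _ ⟨ξ, rfl⟩
      change inner ℂ (a ξ) η = 0
      rw [hin, h, inner_zero_right]
  refine ⟨v, ?_, ?_⟩
  · rw [← VonNeumannAlgebra.commutant_commutant M, VonNeumannAlgebra.mem_commutant_iff]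
    intro t ht
    have hta : ∀ ξ, a (t ξ) = t (a ξ) := fun ξ =>
      congrArg (fun T : H →L[ℂ] H => T ξ) ((VonNeumannAlgebra.mem_commutant_iff.1 ht) a ha)
    have hty : ∀ ξ, y (t ξ) = t (y ξ) := fun ξ =>
      congrArg (fun T : H →L[ℂ] H => T ξ) ((VonNeumannAlgebra.mem_commutant_iff.1 ht) y hy)
    have hcK : K ≤ LinearMap.ker ((t * v - v * t : H →L[ℂ] H) : H →ₗ[ℂ] H) := by
      refine Submodule.topologicalClosure_minimal _ ?_ (ContinuousLinearMap.isClosed_ker _)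
      rintro _ ⟨ξ, rfl⟩
      change t (v (a ξ)) - v (t (a ξ)) = 0
      rw [hva, ← hta, hva, hty, sub_self]
    have hcO : Kᗮ ≤ LinearMap.ker ((t * v - v * t : H →L[ℂ] H) : H →ₗ[ℂ] H) := by
      intro η hη
      change t (v η) - v (t η) = 0
      rw [hv0 η hη, hv0 (t η), map_zero, sub_self]
      rw [hK, hta, (hK η).1 hη, map_zero]
    have htop : (⊤ : Submodule ℂ H) ≤
        LinearMap.ker ((t * v - v * t : H →L[ℂ] H) : H →ₗ[ℂ] H) := by
      rw [← Submodule.sup_orthogonal_of_hasOrthogonalProjection (K := K)]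
      exact sup_le hcK hcO
    ext η
    exact sub_eq_zero.1 (htop (Submodule.mem_top (x := η)))
  · ext ξ
    exact (hva ξ).symm

theorem kp_norm_sq_le (T : H →L[ℂ] H) (hT : T.IsPositive) (ξ : H) :
    ‖T ξ‖ ^ 2 ≤ ‖T‖ * (inner ℂ (T ξ) ξ).re := by
  have h0 : 0 ≤ T := (ContinuousLinearMap.nonneg_iff_isPositive T).2 hT
  obtain ⟨R, hRs, hR⟩ : ∃ R : H →L[ℂ] H, adjoint R = R ∧ R * R = T :=
    ⟨CFC.sqrt T, (IsSelfAdjoint.of_nonneg (CFC.sqrt_nonneg T)), CFC.sqrt_mul_sqrt_self T h0⟩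
  have h1 : ‖T‖ = ‖R‖ * ‖R‖ := by
    rw [← hR]
    have := CStarRing.norm_star_mul_self (x := R)
    rwa [show star R = R from hRs] at this
  have h2 : (inner ℂ (T ξ) ξ).re = ‖R ξ‖ ^ 2 := by
    rw [← hR]
    change (inner ℂ (R (R ξ)) ξ).re = _
    conv_lhs => rw [← hRs]
    rw [adjoint_inner_left, hRs]
    exact inner_self_eq_norm_sq (𝕜 := ℂ) (R ξ)
  have h3 : ‖T ξ‖ ≤ ‖R‖ * ‖R ξ‖ := by
    rw [← hR]; exact R.le_opNorm _
  rw [h1, h2]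
  calc ‖T ξ‖ ^ 2 ≤ (‖R‖ * ‖R ξ‖) ^ 2 := by gcongr
    _ = _ := by ring

theorem kp_hasSum_re {ι : Type*} {f : ι → H} {s : H} (h : HasSum f s) (ξ : H) :
    HasSum (fun i => (inner ℂ (f i) ξ).re) (inner ℂ s ξ).re := by
  have h1 := h.mapL (innerSL ℂ ξ)
  have h2 := Complex.hasSum_re h1
  have h3 : ∀ w : H, ((innerSL ℂ ξ) w).re = (inner ℂ w ξ).re := fun w => by
    rw [innerSL_apply_apply]; exact inner_re_symm (𝕜 := ℂ) _ _
  simpa only [h3] using h2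

theorem kp_pos_of_hasSum {ι : Type*} {f : ι → H →L[ℂ] H} {s : H →L[ℂ] H}
    (hf : ∀ i, (f i).IsPositive) (h : ∀ ξ, HasSum (fun i => f i ξ) (s ξ)) : s.IsPositive := by
  refine ⟨?_, fun ξ => ?_⟩
  · intro ξ η
    have h1 := (h η).mapL (innerSL ℂ ξ)
    have h2 := ((h ξ).mapL (innerSL ℂ η)).star
    have h3 : ∀ i, star ((innerSL ℂ η) (f i ξ)) = (innerSL ℂ ξ) (f i η) := fun i => by
      rw [innerSL_apply_apply, innerSL_apply_apply, ← (hf i).inner_left_eq_inner_right]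
      exact inner_conj_symm _ _
    simp only [h3] at h2
    have h4 := h2.unique h1
    rw [innerSL_apply_apply, innerSL_apply_apply] at h4
    rw [← inner_conj_symm]
    exact h4
  · exact (kp_hasSum_re (h ξ) ξ).nonneg fun i => (hf i).re_inner_nonneg_left ξ

theorem kp_hasSum_of_re {ι : Type*} {f : ι → H →L[ℂ] H} {s : H →L[ℂ] H}
    (hf : ∀ i, (f i).IsPositive) (hs : s.IsPositive)
    (h : ∀ ξ, HasSum (fun i => (inner ℂ (f i ξ) ξ).re) (inner ℂ (s ξ) ξ).re) (ξ : H) :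
    HasSum (fun i => f i ξ) (s ξ) := by
  let T : Finset ι → H →L[ℂ] H := fun F => s - ∑ i ∈ F, f i
  have hsum : ∀ F : Finset ι, (∑ i ∈ F, f i).IsPositive := fun F =>
    (ContinuousLinearMap.nonneg_iff_isPositive _).1
      (Finset.sum_nonneg fun i _ => (ContinuousLinearMap.nonneg_iff_isPositive _).2 (hf i))
  have hre : ∀ F η, (inner ℂ (T F η) η).re =
      (inner ℂ (s η) η).re - ∑ i ∈ F, (inner ℂ (f i η) η).re := by
    intro F η
    simp [T, inner_sub_left, sum_inner]
  have hTpos : ∀ F, (T F).IsPositive := by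
    intro F
    refine ⟨hs.isSymmetric.sub (hsum F).isSymmetric, fun η => ?_⟩
    change 0 ≤ (inner ℂ (T F η) η).re
    rw [hre, sub_nonneg]
    exact sum_le_hasSum F (fun i _ => (hf i).re_inner_nonneg_left η) (h η)
  have hTle : ∀ F, ‖T F‖ ≤ ‖s‖ := by
    intro F
    refine CStarAlgebra.norm_le_norm_of_nonneg_of_le
      ((ContinuousLinearMap.nonneg_iff_isPositive _).2 (hTpos F)) ?_
    exact sub_le_self _ ((ContinuousLinearMap.nonneg_iff_isPositive _).2 (hsum F))
  have hlim : Tendsto (fun F => ‖s‖ * (inner ℂ (T F ξ) ξ).re) atTop (𝓝 0) := by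
    have h1 : Tendsto (fun F : Finset ι => ∑ i ∈ F, (inner ℂ (f i ξ) ξ).re) atTop
      (𝓝 (inner ℂ (s ξ) ξ).re) := h ξ
    have h2 := ((tendsto_const_nhds (x := (inner ℂ (s ξ) ξ).re)).sub h1).const_mul ‖s‖
    simpa only [hre, sub_self, mul_zero] using h2
  have hsq : Tendsto (fun F => ‖T F ξ‖ ^ 2) atTop (𝓝 0) := by
    refine squeeze_zero (fun F => sq_nonneg _) (fun F => ?_) hlim
    refine (kp_norm_sq_le _ (hTpos F) ξ).trans ?_
    exact mul_le_mul_of_nonneg_right (hTle F) ((hTpos F).re_inner_nonneg_left ξ)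
  have hn : Tendsto (fun F => ‖T F ξ‖) atTop (𝓝 0) := by
    have := (Real.continuous_sqrt.tendsto 0).comp hsq
    simpa [Function.comp_def] using this
  have hT0 : Tendsto (fun F => T F ξ) atTop (𝓝 0) := tendsto_zero_iff_norm_tendsto_zero.2 hn
  have := (tendsto_const_nhds (x := s ξ)).sub hT0
  change Tendsto (fun F : Finset ι => ∑ i ∈ F, f i ξ) atTop _
  simpa [T] using this

theorem kp_hasSum_sigma {ι : Type*} {κ : ι → Type*} {f : (Σ i, κ i) → H →L[ℂ] H}
    {g : ι → H →L[ℂ] H} {s : H →L[ℂ] H} (hf : ∀ p, (f p).IsPositive)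
    (hg : ∀ i ξ, HasSum (fun j => f ⟨i, j⟩ ξ) (g i ξ))
    (hs : ∀ ξ, HasSum (fun i => g i ξ) (s ξ)) (ξ : H) :
    HasSum (fun p => f p ξ) (s ξ) := by
  have hgp : ∀ i, (g i).IsPositive := fun i => kp_pos_of_hasSum (fun j => hf ⟨i, j⟩) (hg i)
  have hsp : s.IsPositive := kp_pos_of_hasSum hgp hs
  refine kp_hasSum_of_re hf hsp (fun η => ?_) ξ
  have h1 := fun i => kp_hasSum_re (hg i η) η
  have h2 := kp_hasSum_re (hs η) η
  refine h2.sigma_of_hasSum h1 ?_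
  refine (summable_sigma_of_nonneg (fun p => (hf p).re_inner_nonneg_left η)).2 ⟨fun i => (h1 i).summable, ?_⟩
  have : ∀ i, ∑' j, (inner ℂ (f ⟨i, j⟩ η) η).re = (inner ℂ (g i η) η).re :=
    fun i => (h1 i).tsum_eq
  exact h2.summable.congr fun i => (this i).symm

theorem kp_norm_le {ι : Type*} {y : ι → H →L[ℂ] H} {k a : H →L[ℂ] H}
    (hsa : adjoint a = a) (haa : a * a = k)
    (h : ∀ ξ, HasSum (fun i => (adjoint (y i) * y i) ξ) (k ξ)) (i : ι) (ξ : H) :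
    ‖y i ξ‖ ≤ ‖a ξ‖ := by
  have key : ∀ b : H →L[ℂ] H, (inner ℂ ((adjoint b * b) ξ) ξ).re = ‖b ξ‖ ^ 2 := by
    intro b
    change (inner ℂ (adjoint b (b ξ)) ξ).re = _
    rw [adjoint_inner_left]
    exact inner_self_eq_norm_sq (𝕜 := ℂ) (b ξ)
  have h1 := kp_hasSum_re (h ξ) ξ
  rw [← haa] at h1
  nth_rewrite 1 [← hsa] at h1
  simp only [key] at h1
  have h2 := le_hasSum h1 i (fun j _ => sq_nonneg _)
  exact (sq_le_sq₀ (norm_nonneg _) (norm_nonneg _)).1 h2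

theorem kp_conj {ι : Type*} {f : ι → H →L[ℂ] H} {s : H →L[ℂ] H}
    (h : ∀ ξ, HasSum (fun i => f i ξ) (s ξ)) (b c : H →L[ℂ] H) (ξ : H) :
    HasSum (fun i => (b * f i * c) ξ) ((b * s * c) ξ) :=
  (h (c ξ)).mapL b

theorem kp_trans (M : VonNeumannAlgebra H) {h k l : H →L[ℂ] H} (hk : k ∈ M)
    (hkp : k.IsPositive) (h1 : KPEquiv M h k) (h2 : KPEquiv M k l) : KPEquiv M h l := by
  obtain ⟨ι, x, hxM, hxh, hxk⟩ := h1
  obtain ⟨κ, y, hyM, hyk, hyl⟩ := h2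
  obtain ⟨a, haM, hsa, haa⟩ := kp_sqrt_mem M k hk hkp
  have hv : ∀ j, ∃ v ∈ M, y j = v * a := fun j =>
    kp_douglas M a (y j) haM (hyM j) hsa (kp_norm_le hsa haa hyk j)
  have hw : ∀ i, ∃ w ∈ M, adjoint (x i) = w * a := fun i =>
    kp_douglas M a (adjoint (x i)) haM (kp_adjoint_mem M (hxM i)) hsa
      (kp_norm_le (y := fun i => adjoint (x i)) hsa haa
        (by simpa only [adjoint_adjoint] using hxk) i)
  choose v hvM hv using hv
  choose w hwM hw using hw
  have adj_mul : ∀ b c : H →L[ℂ] H, adjoint (b * c) = adjoint c * adjoint b :=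
    fun b c => adjoint_comp b c
  have hx : ∀ i, x i = a * adjoint (w i) := fun i => by
    rw [← adjoint_adjoint (x i), hw, adj_mul, hsa]
  have hya : ∀ j, adjoint (y j) = a * adjoint (v j) := fun j => by
    rw [hv, adj_mul, hsa]
  have hz : ∀ i j, v j * x i = y j * adjoint (w i) := fun i j => by
    rw [hx, hv, mul_assoc]
  refine ⟨(Σ _ : ι, κ), fun p => v p.2 * x p.1, fun p => mul_mem (hvM _) (hxM _), ?_, ?_⟩
  · refine kp_hasSum_sigma (f := fun p : (Σ _ : ι, κ) => adjoint (v p.2 * x p.1) * (v p.2 * x p.1))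
      (fun p => kp_star_mul_pos _) (fun i ξ => ?_) hxh
    have h3 := kp_conj hyk (w i) (adjoint (w i)) ξ
    have e1 : ∀ j, adjoint (v j * x i) * (v j * x i) =
        w i * (adjoint (y j) * y j) * adjoint (w i) := fun j => by
      rw [hz, adj_mul, adjoint_adjoint]; simp only [mul_assoc]
    have e2 : adjoint (x i) * x i = w i * k * adjoint (w i) := by
      rw [hw, hx, ← haa]; simp only [mul_assoc]
    simp only [e1, e2]
    exact h3
  · intro ξ
    have h4 := kp_hasSum_sigma
      (f := fun p : (Σ _ : κ, ι) => (v p.1 * x p.2) * adjoint (v p.1 * x p.2))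
      (fun p => kp_mul_star_pos _) (fun j ξ => (?_ : HasSum _ ((y j * adjoint (y j)) ξ))) hyl ξ
    · let E : (Σ _ : ι, κ) ≃ (Σ _ : κ, ι) :=
        ⟨fun p => ⟨p.2, p.1⟩, fun p => ⟨p.2, p.1⟩, fun _ => rfl, fun _ => rfl⟩
      exact (E.hasSum_iff (f := fun p : (Σ _ : κ, ι) =>
        ((v p.1 * x p.2) * adjoint (v p.1 * x p.2)) ξ)).2 h4
    · have h3 := kp_conj hxk (v j) (adjoint (v j)) ξ
      have e1 : ∀ i, (v j * x i) * adjoint (v j * x i) =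
          v j * (x i * adjoint (x i)) * adjoint (v j) := fun i => by
        rw [adj_mul]; simp only [mul_assoc]
      have e2 : y j * adjoint (y j) = v j * k * adjoint (v j) := by
        rw [hya, hv, ← haa]; simp only [mul_assoc]
      simp only [e1, e2]
      exact h3

/-- The Kadison–Pedersen relation `≈` on `M₊` is an equivalence relation,
is homogeneous (`h ≈ k` implies `λh ≈ λk` for `λ > 0`), and is completely additive. -/
theorem kpEquiv_equivalence (M : VonNeumannAlgebra H) :
    (∀ h, h ∈ M → h.IsPositive → KPEquiv M h h) ∧
    (∀ h k, h ∈ M → k ∈ M → h.IsPositive → k.IsPositive →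
      KPEquiv M h k → KPEquiv M k h) ∧
    (∀ h k l, h ∈ M → k ∈ M → l ∈ M → h.IsPositive → k.IsPositive → l.IsPositive →
      KPEquiv M h k → KPEquiv M k l → KPEquiv M h l) ∧
    (∀ h k (c : ℝ), 0 < c → h ∈ M → k ∈ M → h.IsPositive → k.IsPositive →
      KPEquiv M h k → KPEquiv M ((c : ℂ) • h) ((c : ℂ) • k)) ∧
    (∀ (ι : Type u) (hf kf : ι → H →L[ℂ] H) (hh kk : H →L[ℂ] H),
      (∀ i, hf i ∈ M ∧ (hf i).IsPositive ∧ kf i ∈ M ∧ (kf i).IsPositive) →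
      (∀ i, KPEquiv M (hf i) (kf i)) → hh ∈ M → kk ∈ M →
      (∀ ξ : H, HasSum (fun i => hf i ξ) (hh ξ)) →
      (∀ ξ : H, HasSum (fun i => kf i ξ) (kk ξ)) →
      KPEquiv M hh kk) := by
  refine ⟨?_, ?_, ?_, ?_, ?_⟩
  · intro h hM hp
    obtain ⟨a, haM, hsa, haa⟩ := kp_sqrt_mem M h hM hp
    refine ⟨PUnit, fun _ => a, fun _ => haM, fun ξ => ?_, fun ξ => ?_⟩
    · simp only [hsa, haa]
      exact hasSum_unique (fun _ : PUnit => h ξ)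
    · simp only [hsa, haa]
      exact hasSum_unique (fun _ : PUnit => h ξ)
  · rintro h k - - - - ⟨ι, x, hx, h1, h2⟩
    refine ⟨ι, fun i => adjoint (x i), fun i => kp_adjoint_mem M (hx i), ?_, ?_⟩
    · simpa only [adjoint_adjoint] using h2
    · simpa only [adjoint_adjoint] using h1
  · intro h k l _ hk _ _ hkp _ h1 h2
    exact kp_trans M hk hkp h1 h2
  · rintro h k c hc - - - - ⟨ι, x, hx, h1, h2⟩
    have hcc : ((Real.sqrt c : ℝ) : ℂ) * ((Real.sqrt c : ℝ) : ℂ) = (c : ℂ) := by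
      rw [← Complex.ofReal_mul, Real.mul_self_sqrt hc.le]
    have hadj : ∀ i, adjoint (((Real.sqrt c : ℝ) : ℂ) • x i) =
        ((Real.sqrt c : ℝ) : ℂ) • adjoint (x i) := fun i => by
      rw [map_smulₛₗ]; simp
    refine ⟨ι, fun i => ((Real.sqrt c : ℝ) : ℂ) • x i, fun i => ?_, fun ξ => ?_, fun ξ => ?_⟩
    · exact M.toStarSubalgebra.toSubalgebra.smul_mem (hx i) _
    · have h3 := (h1 ξ).const_smul (c : ℂ)
      simp only [hadj, smul_mul_smul_comm, hcc]
      exact h3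
    · have h3 := (h2 ξ).const_smul (c : ℂ)
      simp only [hadj, smul_mul_smul_comm, hcc]
      exact h3
  · intro ι hf kf hh kk _ hE _ _ hs ks
    choose κ x hx h1 h2 using hE
    refine ⟨(Σ i, κ i), fun p => x p.1 p.2, fun p => hx _ _, ?_, ?_⟩
    · exact kp_hasSum_sigma (f := fun p : (Σ i, κ i) => adjoint (x p.1 p.2) * x p.1 p.2)
        (fun p => kp_star_mul_pos _) h1 hs
    · exact kp_hasSum_sigma (f := fun p : (Σ i, κ i) => x p.1 p.2 * adjoint (x p.1 p.2))
        (fun p => kp_mul_star_pos _) h2 ks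
end
end
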